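/- Let h, d, m ∈ ℕ with m ≥ 2. Then no set V_i^j (1 ≤ j ≤ m−1) of G_{h,d,m} contains a subset that is 3-fat 7-path-connected in G_{h,d,m}. -/

import Mathlib

open SimpleGraph

namespace CGT

/-- Distance between two vertex sets, as an extended natural number. -/
noncomputable def sDist {V : Type*} (G : SimpleGraph V) (U U' : Set V) : ℕ∞ :=
  ⨅ (u : U) (v : U'), G.edist u.1 v.1

/-- The ball of radius `r` around a vertex set `U`. -/
def gBall {V : Type*} (G : SimpleGraph V) (U : Set V) (r : ℕ) : Set V :=
  {v | ∃ u ∈ U, G.edist u v ≤ (r : ℕ∞)}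

/-- A set of vertices is connected if the induced subgraph is connected. -/
def SetConn {V : Type*} (G : SimpleGraph V) (U : Set V) : Prop :=
  (G.induce U).Connected

/-- The vertex set of a walk. -/
def walkSupp {V : Type*} {G : SimpleGraph V} {a b : V} (p : G.Walk a b) : Set V :=
  {v | v ∈ p.support}

/-- `X` separates `Y` and `Z` in `G`: every path with one end in `Y` and one in `Z`
contains a vertex of `X`. -/
def Separates {V : Type*} (G : SimpleGraph V) (X Y Z : Set V) : Prop :=
  ∀ ⦃y z : V⦄, y ∈ Y → z ∈ Z → ∀ p : G.Walk y z, p.IsPath → ∃ x ∈ X, x ∈ p.support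

/-- `f` is an `(M,A)`-quasi-isometry from `G` to `H`.  The two-sided distance bound
`M⁻¹ d_G(u,v) - A ≤ d_H(f u, f v) ≤ M d_G(u,v) + A` is stated multiplied out over `ℕ∞`. -/
structure IsQI {V V' : Type*} (M A : ℕ) (G : SimpleGraph V) (H : SimpleGraph V')
    (f : V → V') : Prop where
  upper : ∀ u v : V, H.edist (f u) (f v) ≤ (M : ℕ∞) * G.edist u v + (A : ℕ∞)
  lower : ∀ u v : V, G.edist u v ≤ (M : ℕ∞) * H.edist (f u) (f v) + (M : ℕ∞) * (A : ℕ∞)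
  dense : ∀ w : V', ∃ v : V, H.edist w (f v) ≤ (A : ℕ∞)

/-- `G` is `(M,A)`-quasi-isometric to `H`. -/
def QIsometric {V V' : Type*} (M A : ℕ) (G : SimpleGraph V) (H : SimpleGraph V') : Prop :=
  ∃ f : V → V', IsQI M A G H f

/-- `X` is a minor of `G`. -/
def HasMinor {V W : Type*} (G : SimpleGraph V) (X : SimpleGraph W) : Prop :=
  ∃ U : W → Set V,
    (∀ x, (U x).Nonempty) ∧ (∀ x, SetConn G (U x)) ∧
    (∀ ⦃x y⦄, x ≠ y → Disjoint (U x) (U y)) ∧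
    ∀ ⦃x y⦄, X.Adj x y → ∃ u ∈ U x, ∃ v ∈ U y, G.Adj u v

/-- The `(a × b)`-grid graph. -/
def gridGraph (a b : ℕ) : SimpleGraph (Fin a × Fin b) :=
  SimpleGraph.fromRel (fun u v =>
    (u.1 = v.1 ∧ u.2.1 + 1 = v.2.1) ∨ (u.2 = v.2 ∧ u.1.1 + 1 = v.1.1))

/-- A `K`-fat model of `X` in `G`: disjoint connected branch sets joined by internally
disjoint branch paths, all pairwise at distance at least `K` except for a branch path and
the branch sets of its endpoints. -/
structure FatModel {V W : Type*} (G : SimpleGraph V) (X : SimpleGraph W) (K : ℕ) where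
  branch : W → Set V
  branch_nonempty : ∀ x, (branch x).Nonempty
  branch_connected : ∀ x, SetConn G (branch x)
  branch_disjoint : ∀ ⦃x y⦄, x ≠ y → Disjoint (branch x) (branch y)
  pathEnd : ∀ ⦃x y⦄, X.Adj x y → V
  path : ∀ ⦃x y⦄ (e : X.Adj x y), G.Walk (pathEnd e) (pathEnd e.symm)
  path_isPath : ∀ ⦃x y⦄ (e : X.Adj x y), (path e).IsPath
  path_symm : ∀ ⦃x y⦄ (e : X.Adj x y), path e.symm = (path e).reverse
  pathEnd_mem : ∀ ⦃x y⦄ (e : X.Adj x y), pathEnd e ∈ branch x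
  path_meets : ∀ ⦃x y⦄ (e : X.Adj x y) (z : W) (v : V), v ∈ (path e).support → v ∈ branch z →
    (z = x ∧ v = pathEnd e) ∨ (z = y ∧ v = pathEnd e.symm)
  path_int_disjoint : ∀ ⦃x y x' y'⦄ (e : X.Adj x y) (e' : X.Adj x' y'), s(x, y) ≠ s(x', y') →
    ∀ v, v ∈ (path e).support → v ∈ (path e').support → v = pathEnd e' ∨ v = pathEnd e'.symm
  fat_branch : ∀ ⦃x y⦄, x ≠ y → (K : ℕ∞) ≤ sDist G (branch x) (branch y)
  fat_path_branch : ∀ ⦃x y⦄ (e : X.Adj x y) (z : W), z ≠ x → z ≠ y →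
    (K : ℕ∞) ≤ sDist G (walkSupp (path e)) (branch z)
  fat_paths : ∀ ⦃x y x' y'⦄ (e : X.Adj x y) (e' : X.Adj x' y'), s(x, y) ≠ s(x', y') →
    (K : ℕ∞) ≤ sDist G (walkSupp (path e)) (walkSupp (path e'))

/-- `X` is a `K`-fat minor of `G`. -/
def IsFatMinor {V W : Type*} (G : SimpleGraph V) (X : SimpleGraph W) (K : ℕ) : Prop :=
  Nonempty (FatModel G X K)

/-- `W` is a `K`-fat `n`-path-connected set in `G`. -/
def FatPathConn {V : Type*} (G : SimpleGraph V) (K n : ℕ) (W : Set V) : Prop :=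
  (∃ S : Finset V, ↑S ⊆ W ∧ 2 * n ≤ S.card) ∧
  (∀ ⦃u v : V⦄, u ∈ W → v ∈ W → u ≠ v → (K : ℕ∞) ≤ G.edist u v) ∧
  ∀ l : ℕ, l ≤ n → ∀ A B : Finset V, ↑A ⊆ W → ↑B ⊆ W → A.card = l → B.card = l →
    ∃ (a b : Fin l → V) (P : ∀ i : Fin l, G.Walk (a i) (b i)),
      (∀ i, (P i).IsPath) ∧ (∀ i, a i ∈ A ∧ b i ∈ B) ∧
      ∀ i j, i ≠ j → (K : ℕ∞) ≤ sDist G (walkSupp (P i)) (walkSupp (P j))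

end CGT

namespace Ghdm

/-- Raw vertex codes for the graphs `G_{h,d,m}`:
`path k` is the `k`-th vertex of the base path; `tree j i p` is the vertex at position `p`
of the `i`-th binary tree at level `j` (the root being position `[]`); and
`spine j i k t e s` is the `s`-th internal vertex of the spine from the `k`-th leaf of that
tree to the `e`-th element of the `t`-th local gluing set at level `j-1`. -/
inductive Raw : Type where
  | path (k : ℕ)
  | tree (j i : ℕ) (p : List Bool)
  | spine (j i k t e s : ℕ)
deriving DecidableEq

/-- `N = 2^{h+1} - 1`, the number of copies of `G_{h,d,m-1}` glued inside `G_{h,d,m}`. -/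
def NN (h : ℕ) : ℕ := 2 ^ (h + 1) - 1

/-- Canonical representative of a raw vertex code: all tree roots are identified with the
single root `tree m 1 []`, and the leftmost leaf of tree `i > 1` is identified with the
rightmost leaf of tree `i - 1` (consecutive copies are glued along these leaves). -/
def canon (h m : ℕ) : Raw → Raw
  | .tree j i p =>
    if p = [] then .tree m 1 []
    else if p = List.replicate h false ∧ 1 < i then .tree j (i - 1) (List.replicate h true)
    else .tree j i p
  | x => x

/-- The `q`-bit binary representation of `i` (most significant bit first);
`false` means "left". -/
def natToBits (q i : ℕ) : List Bool := (List.range q).map fun a => Nat.testBit i (q - 1 - a)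

/-- Position of the `k`-th leaf (1-based, from the left) in a binary tree of height `h`. -/
def leafPos (h k : ℕ) : List Bool := natToBits h (k - 1)

/-- The `e`-th element of the `g`-th gluing set `V^{jv}_g` (at level `jv`):
its element `e = 1` is an anchor of the base path, and its element `e ≥ 2` is a shared
extreme leaf of the trees at level `e`. -/
def VsetElem (h d jv g e : ℕ) : Raw :=
  if e = 1 then .path ((g - 1) * NN h ^ (jv - 1) * (d + 1))
  else if (g - 1) * NN h ^ (jv - e) = 0 then .tree e 1 (List.replicate h false)
  else .tree e ((g - 1) * NN h ^ (jv - e)) (List.replicate h true)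

/-- Valid (canonical) vertex codes of `G_{h,d,m}`. -/
def Valid (h d m : ℕ) : Raw → Prop
  | .path k => k ≤ (d + 1) * NN h ^ (m - 1)
  | .tree j i p => 2 ≤ j ∧ j ≤ m ∧ 1 ≤ i ∧ i ≤ NN h ^ (m - j) ∧ p.length ≤ h ∧
      (p = [] → j = m ∧ i = 1) ∧ (p = List.replicate h false → p ≠ [] → i = 1)
  | .spine j i k t e s => 2 ≤ j ∧ j ≤ m ∧ 1 ≤ i ∧ i ≤ NN h ^ (m - j) ∧
      1 ≤ k ∧ k ≤ 2 ^ h ∧ (t = 2 * k - 2 ∨ t = 2 * k + 1) ∧ 1 ≤ t ∧ t ≤ 2 ^ (h + 1) ∧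
      1 ≤ e ∧ e ≤ j - 1 ∧ 1 ≤ s ∧ s ≤ d

/-- Generating adjacencies between raw vertex codes: consecutive base path vertices,
parent/child in the binary trees, consecutive spine vertices, a spine and the leaf it
starts at, a spine and the gluing-set vertex it ends at (the latter collapsed to a single
edge when `d = 0`). -/
inductive rawAdj (h d : ℕ) : Raw → Raw → Prop
  | base (k : ℕ) : rawAdj h d (.path k) (.path (k + 1))
  | child (j i : ℕ) (p : List Bool) (b : Bool) : p.length < h →
      rawAdj h d (.tree j i p) (.tree j i (p ++ [b]))
  | step (j i k t e s : ℕ) : rawAdj h d (.spine j i k t e s) (.spine j i k t e (s + 1))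
  | toLeaf (j i k t e : ℕ) : rawAdj h d (.tree j i (leafPos h k)) (.spine j i k t e 1)
  | toV (j i k t e : ℕ) :
      rawAdj h d (.spine j i k t e d) (VsetElem h d (j - 1) ((i - 1) * NN h + t) e)
  | short (j i k t e : ℕ) : d = 0 → 1 ≤ k → k ≤ 2 ^ h → (t = 2 * k - 2 ∨ t = 2 * k + 1) →
      1 ≤ t → t ≤ 2 ^ (h + 1) → 1 ≤ e → e ≤ j - 1 →
      rawAdj h d (.tree j i (leafPos h k)) (VsetElem h d (j - 1) ((i - 1) * NN h + t) e)

/-- Adjacency of canonical representatives. -/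
def rel (h d m : ℕ) (x y : Raw) : Prop :=
  ∃ a b, rawAdj h d a b ∧ x = canon h m a ∧ y = canon h m b

/-- The vertex set of `G_{h,d,m}`. -/
def Verts (h d m : ℕ) : Set Raw := {x | Valid h d m x}

/-- The graph `G_{h,d,m}`. -/
def G (h d m : ℕ) : SimpleGraph (Verts h d m) :=
  (SimpleGraph.fromRel (rel h d m)).induce (Verts h d m)

/-- Lift a set of raw codes to a set of vertices of `G_{h,d,m}`. -/
def lift {h d m : ℕ} (S : Set Raw) : Set (Verts h d m) := Subtype.val ⁻¹' S

/-- The root `R(G_{h,d,m})`. -/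
def RootR (m : ℕ) : Raw := .tree m 1 []

/-- The gluing set `V^{jv}_g` of `G_{h,d,m}`, as a set of raw codes. -/
def VsetRaw (h d m jv g : ℕ) : Set Raw :=
  {x | ∃ e, 1 ≤ e ∧ e ≤ jv ∧ x = canon h m (VsetElem h d jv g e)}

/-- The set `S(G_{h,d,m})`. -/
def SsetR (h d m : ℕ) : Set Raw :=
  VsetRaw h d m (m - 1) 1 ∪ {canon h m (.tree m 1 (leafPos h 1))}

/-- The set `T(G_{h,d,m})`. -/
def TsetR (h d m : ℕ) : Set Raw :=
  VsetRaw h d m (m - 1) (2 ^ (h + 1)) ∪ {canon h m (.tree m 1 (leafPos h (2 ^ h)))}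

/-- For a vertex of the top binary tree at position `p`, the (1-based) index of the
leftmost leaf of the top tree below it. -/
def kOf (h : ℕ) (p : List Bool) : ℕ :=
  (p.foldl (fun a b => 2 * a + if b then 1 else 0) 0) * 2 ^ (h - p.length) + 1

/-- `S(Δ(x))` for the vertex `x` of the top binary tree `B(G_{h,d,m})` at position `p`. -/
def SDeltaR (h d m : ℕ) (p : List Bool) : Set Raw :=
  VsetRaw h d m (m - 1) (2 * kOf h p - 1) ∪ {canon h m (.tree m 1 (leafPos h (kOf h p)))}

/-- The leaf of `B(G_{h,d,m})` immediately to the left of the leftmost leaf below the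
top-tree vertex at position `p`; it is the unique leaf joined by spines to `S(Δ(x))`. -/
def leafLeftR (h m : ℕ) (p : List Bool) : Raw :=
  canon h m (.tree m 1 (leafPos h (kOf h p - 1)))

end Ghdm

namespace Ghdm

/-- step in the tree -/
def TStep (R : ℕ × ℕ → Prop) (a b : ℕ × ℕ) : Prop :=
  R a ∧ R b ∧ (b = (a.1 + 1, a.2 / 2) ∨ a = (b.1 + 1, b.2 / 2))

abbrev TReach (R : ℕ × ℕ → Prop) := Relation.ReflTransGen (TStep R)

theorem TStep.symm {R a b} (h : TStep R a b) : TStep R b a :=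
  ⟨h.2.1, h.1, h.2.2.symm⟩

theorem TReach.symm {R a b} (h : TReach R a b) : TReach R b a := by
  induction h with
  | refl => exact .refl
  | tail _ h2 ih => exact (Relation.ReflTransGen.single h2.symm).trans ih

def Under (s w : ℕ) (a : ℕ × ℕ) : Prop := a.1 ≤ s ∧ a.2 / 2 ^ (s - a.1) = w

theorem under_step {R s w a b} (h : TStep R a b) (ha : Under s w a) (hb : ¬ Under s w b) :
    a = (s, w) ∧ b = (s + 1, w / 2) := by
  obtain ⟨a1, a2⟩ := a
  obtain ⟨b1, b2⟩ := b
  obtain ⟨_, _, h | h⟩ := h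
  · simp only [Prod.mk.injEq] at h
    obtain ⟨rfl, rfl⟩ := h
    simp only [Under] at ha hb
    obtain ⟨h1, h2⟩ := ha
    rcases Nat.lt_or_ge a1 s with h3 | h3
    · exfalso; apply hb
      refine ⟨h3, ?_⟩
      rw [Nat.div_div_eq_div_mul, ← h2, ← pow_succ']
      congr 2; omega
    · have : a1 = s := by omega
      subst this
      simp at h2
      subst h2; simp
  · simp only [Prod.mk.injEq] at h
    obtain ⟨rfl, rfl⟩ := h
    simp only [Under] at ha hb
    exfalso; apply hb
    obtain ⟨h1, h2⟩ := ha
    refine ⟨by omega, ?_⟩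
    rw [Nat.div_div_eq_div_mul, ← pow_succ'] at h2
    rw [← h2]; congr 2; omega

theorem treach_exit {R s w a b} (h : TReach R a b) (ha : Under s w a) (hb : ¬ Under s w b) :
    R (s, w) ∧ R (s + 1, w / 2) ∧ TReach R a (s, w) ∧ TReach R (s + 1, w / 2) b := by
  induction h with
  | refl => exact absurd ha hb
  | @tail c e h1 h2 ih =>
    by_cases hc : Under s w c
    · obtain ⟨rfl, rfl⟩ := under_step h2 hc hb
      exact ⟨h2.1, h2.2.1, h1, .refl⟩
    · obtain ⟨h3, h4, h5, h6⟩ := ih hc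
      exact ⟨h3, h4, h5, h6.tail h2⟩

theorem under_leaf {s w v : ℕ} : Under s w (0, v) ↔ w * 2 ^ s ≤ v ∧ v < (w + 1) * 2 ^ s := by
  simp only [Under, Nat.zero_le, true_and, Nat.sub_zero]
  constructor
  · rintro rfl
    exact ⟨Nat.div_mul_le_self _ _, Nat.lt_mul_of_div_lt (by omega) (by positivity)⟩
  · rintro ⟨h1, h2⟩
    exact Nat.div_eq_of_lt_le h1 h2

def Cov (R : ℕ × ℕ → Prop) (a b : ℕ) : Prop :=
  ∃ u v, u ≤ a ∧ b ≤ v ∧ R (0, u) ∧ R (0, v) ∧ TReach R (0, u) (0, v)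

structure Fs (h : ℕ) (R : ℕ × ℕ → Prop) (c : ℕ → Prop) : Prop where
  bd : ∀ a, R a → a.1 < h ∧ a.2 < 2 ^ (h - a.1)
  f1 : ∀ k, k < 2 ^ h → ¬ c (2 * k) → Cov R k k
  f2 : ∀ k, k + 1 < 2 ^ h → ¬ c (2 * k + 1) → Cov R k k ∨ Cov R (k + 1) (k + 1)
  f3 : ∀ k, k + 1 < 2 ^ h → ¬ c (2 * k) → ¬ c (2 * k + 1) → ¬ c (2 * k + 2) → Cov R k (k + 1)

structure Far (P Q : ℕ × ℕ → Prop) : Prop where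
  eq : ∀ a, P a → Q a → False
  up : ∀ s u, P (s, u) → Q (s + 1, u / 2) → False
  dn : ∀ s u, Q (s, u) → P (s + 1, u / 2) → False
  sib : ∀ s u, P (s, 2 * u) → Q (s, 2 * u + 1) → False
  sib' : ∀ s u, Q (s, 2 * u) → P (s, 2 * u + 1) → False

theorem Far.symm {P Q} (h : Far P Q) : Far Q P :=
  ⟨fun a x y => h.eq a y x, h.dn, h.up, h.sib', h.sib⟩

theorem covL {R : ℕ × ℕ → Prop} {s w : ℕ}
    (hc : Cov R (w * 2 ^ (s+1)) (w * 2 ^ (s+1) + 2 ^ s - 1)) :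
    Cov R (w * 2 ^ (s+1)) (w * 2 ^ (s+1) + 2 ^ (s+1) - 1) ∨
    (R (s+1, w) ∧ ∃ u, u ≤ w * 2 ^ (s+1) ∧ R (0, u) ∧ TReach R (0, u) (s+1, w)) ∨
    (R (s, 2 * w) ∧ R (0, w * 2 ^ (s+1)) ∧ R (0, w * 2 ^ (s+1) + 2 ^ s - 1) ∧
      TReach R (0, w * 2 ^ (s+1)) (s, 2 * w)) := by
  obtain ⟨u, v, hu, hv, Ru, Rv, hr⟩ := hc
  have e1 : 2 ^ (s+1) = 2 * 2 ^ s := by rw [pow_succ']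
  have e2 : 1 ≤ 2 ^ s := Nat.one_le_two_pow
  have ux : ∀ v, Under (s+1) w (0, v) ↔ w * 2 ^ (s+1) ≤ v ∧ v < w * 2 ^ (s+1) + 2 ^ (s+1) := by
    intro v; rw [under_leaf, Nat.add_mul, Nat.one_mul]
  have uy : ∀ v, Under s (2*w) (0, v) ↔ w * 2 ^ (s+1) ≤ v ∧ v < w * 2 ^ (s+1) + 2 ^ s := by
    intro v; rw [under_leaf, Nat.add_mul, Nat.one_mul]
    have : 2 * w * 2 ^ s = w * 2 ^ (s+1) := by rw [e1]; ring
    rw [this]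
  by_cases h1 : w * 2 ^ (s+1) + 2 ^ (s+1) - 1 ≤ v
  · exact .inl ⟨u, v, hu, h1, Ru, Rv, hr⟩
  right
  by_cases h2 : u < w * 2 ^ (s+1)
  · left
    obtain ⟨h3, -, h4, -⟩ := treach_exit hr.symm ((ux v).2 (by omega)) (mt (ux u).1 (by omega))
    exact ⟨h3, u, hu, Ru, hr.trans h4⟩
  have h3 : u = w * 2 ^ (s+1) := by omega
  subst h3
  by_cases h4 : w * 2 ^ (s+1) + 2 ^ s - 1 < v
  · left
    obtain ⟨h3, h5, h6, -⟩ := treach_exit hr ((uy _).2 (by omega)) (mt (uy v).1 (by omega))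
    have : 2 * w / 2 = w := by omega
    rw [this] at h5
    exact ⟨h5, _, le_rfl, Ru, h6.tail ⟨h3, h5, .inl (by simp)⟩⟩
  right
  have h5 : v = w * 2 ^ (s+1) + 2 ^ s - 1 := by omega
  subst h5
  rcases s with _ | s
  · have : 2 * w = w * 2 := by ring
    simp at *
    rw [this]
    exact ⟨Ru, Ru, .refl⟩
  · have e3 : 2 ^ (s+1) = 2 * 2 ^ s := by rw [pow_succ']
    have e4 : 1 ≤ 2 ^ s := Nat.one_le_two_pow
    have ug : ∀ v, Under s (4*w) (0, v) ↔ w * 2 ^ (s+2) ≤ v ∧ v < w * 2 ^ (s+2) + 2 ^ s := by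
      intro v; rw [under_leaf, Nat.add_mul, Nat.one_mul]
      have : 4 * w * 2 ^ s = w * 2 ^ (s+2) := by rw [e1, e3]; ring
      rw [this]
    obtain ⟨h3, h5, h6, -⟩ := treach_exit hr ((ug _).2 (by simp)) (mt (ug _).1 (by
      have : s + 1 + 1 = s + 2 := rfl
      rw [this]; omega))
    have : 4 * w / 2 = 2 * w := by omega
    rw [this] at h5
    exact ⟨h5, Ru, Rv, h6.tail ⟨h3, h5, .inl (by simp; omega)⟩⟩

theorem covR {R : ℕ × ℕ → Prop} {s w : ℕ}
    (hc : Cov R (w * 2 ^ (s+1) + 2 ^ s) (w * 2 ^ (s+1) + 2 ^ (s+1) - 1)) :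
    Cov R (w * 2 ^ (s+1)) (w * 2 ^ (s+1) + 2 ^ (s+1) - 1) ∨
    (R (s+1, w) ∧ ∃ v, w * 2 ^ (s+1) + 2 ^ (s+1) - 1 ≤ v ∧ R (0, v) ∧ TReach R (s+1, w) (0, v)) ∨
    (R (s, 2 * w + 1) ∧ R (0, w * 2 ^ (s+1) + 2 ^ s) ∧ R (0, w * 2 ^ (s+1) + 2 ^ (s+1) - 1) ∧
      TReach R (s, 2 * w + 1) (0, w * 2 ^ (s+1) + 2 ^ (s+1) - 1)) := by
  obtain ⟨u, v, hu, hv, Ru, Rv, hr⟩ := hc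
  have e1 : 2 ^ (s+1) = 2 * 2 ^ s := by rw [pow_succ']
  have e2 : 1 ≤ 2 ^ s := Nat.one_le_two_pow
  have ux : ∀ v, Under (s+1) w (0, v) ↔ w * 2 ^ (s+1) ≤ v ∧ v < w * 2 ^ (s+1) + 2 ^ (s+1) := by
    intro v; rw [under_leaf, Nat.add_mul, Nat.one_mul]
  have uy : ∀ v, Under s (2*w+1) (0, v) ↔ w * 2 ^ (s+1) + 2 ^ s ≤ v ∧
      v < w * 2 ^ (s+1) + 2 ^ (s+1) := by
    intro v; rw [under_leaf]
    have : (2 * w + 1) * 2 ^ s = w * 2 ^ (s+1) + 2 ^ s := by rw [e1]; ring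
    have h' : (2 * w + 1 + 1) * 2 ^ s = w * 2 ^ (s+1) + 2 ^ (s+1) := by rw [e1]; ring
    rw [this, h']
  by_cases h1 : u ≤ w * 2 ^ (s+1)
  · exact .inl ⟨u, v, h1, hv, Ru, Rv, hr⟩
  right
  by_cases h2 : w * 2 ^ (s+1) + 2 ^ (s+1) - 1 < v
  · left
    obtain ⟨h3, -, h4, -⟩ := treach_exit hr ((ux u).2 (by omega)) (mt (ux v).1 (by omega))
    exact ⟨h3, v, hv, Rv, h4.symm.trans hr⟩
  have h3 : v = w * 2 ^ (s+1) + 2 ^ (s+1) - 1 := by omega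
  subst h3
  by_cases h4 : u < w * 2 ^ (s+1) + 2 ^ s
  · left
    obtain ⟨h3, h5, h6, -⟩ := treach_exit hr.symm ((uy _).2 (by omega)) (mt (uy u).1 (by omega))
    have : (2 * w + 1) / 2 = w := by omega
    rw [this] at h5
    exact ⟨h5, _, le_rfl, Rv, TReach.symm (h6.tail ⟨h3, h5, .inl (by simp; omega)⟩)⟩
  right
  have h5 : u = w * 2 ^ (s+1) + 2 ^ s := by omega
  subst h5
  rcases s with _ | s
  · have : 2 * w = w * 2 := by ring
    simp at *
    rw [this]
    exact ⟨Ru, Ru, .refl⟩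
  · have e3 : 2 ^ (s+1) = 2 * 2 ^ s := by rw [pow_succ']
    have e4 : 1 ≤ 2 ^ s := Nat.one_le_two_pow
    have ug : ∀ v, Under s (4*w+3) (0, v) ↔ w * 2 ^ (s+1+1) + 3 * 2 ^ s ≤ v ∧
        v < w * 2 ^ (s+1+1) + 4 * 2 ^ s := by
      intro v; rw [under_leaf]
      have : (4 * w + 3) * 2 ^ s = w * 2 ^ (s+1+1) + 3 * 2 ^ s := by rw [e1, e3]; ring
      have h' : (4 * w + 3 + 1) * 2 ^ s = w * 2 ^ (s+1+1) + 4 * 2 ^ s := by rw [e1, e3]; ring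
      rw [this, h']
    obtain ⟨h3, h5, h6, -⟩ := treach_exit hr.symm ((ug _).2 (by omega)) (mt (ug _).1 (by omega))
    have : (4 * w + 3) / 2 = 2 * w + 1 := by omega
    rw [this] at h5
    exact ⟨h5, Ru, Rv, TReach.symm (h6.tail ⟨h3, h5, .inl (by simp; omega)⟩)⟩

theorem same_case {h s w : ℕ} {R R' : ℕ × ℕ → Prop} {c c' : ℕ → Prop}
    (hR : Fs h R c) (hR' : Fs h R' c') (far : Far R R')
    (f0 : ∀ t, t < NN h → ¬ (c t ∧ c' t)) (hs : s + 1 ≤ h) (hw : w < 2 ^ (h - (s+1)))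
    (h1 : Cov R (w * 2 ^ (s+1)) (w * 2 ^ (s+1) + 2 ^ s - 1))
    (h2 : Cov R (w * 2 ^ (s+1) + 2 ^ s) (w * 2 ^ (s+1) + 2 ^ (s+1) - 1)) :
    Cov R (w * 2 ^ (s+1)) (w * 2 ^ (s+1) + 2 ^ (s+1) - 1) ∨
    Cov R' (w * 2 ^ (s+1)) (w * 2 ^ (s+1) + 2 ^ (s+1) - 1) := by
  have e1 : 2 ^ (s+1) = 2 * 2 ^ s := by rw [pow_succ']
  have e2 : 1 ≤ 2 ^ s := Nat.one_le_two_pow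
  have ux : ∀ v, Under (s+1) w (0, v) ↔ w * 2 ^ (s+1) ≤ v ∧ v < w * 2 ^ (s+1) + 2 ^ (s+1) := by
    intro v; rw [under_leaf, Nat.add_mul, Nat.one_mul]
  have uy : ∀ v, Under s (2*w) (0, v) ↔ w * 2 ^ (s+1) ≤ v ∧ v < w * 2 ^ (s+1) + 2 ^ s := by
    intro v; rw [under_leaf, Nat.add_mul, Nat.one_mul]
    have : 2 * w * 2 ^ s = w * 2 ^ (s+1) := by rw [e1]; ring
    rw [this]
  have uz : ∀ v, Under s (2*w+1) (0, v) ↔ w * 2 ^ (s+1) + 2 ^ s ≤ v ∧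
      v < w * 2 ^ (s+1) + 2 ^ (s+1) := by
    intro v; rw [under_leaf]
    have : (2 * w + 1) * 2 ^ s = w * 2 ^ (s+1) + 2 ^ s := by rw [e1]; ring
    have h' : (2 * w + 1 + 1) * 2 ^ s = w * 2 ^ (s+1) + 2 ^ (s+1) := by rw [e1]; ring
    rw [this, h']
  have d1 : 2 * w / 2 = w := by omega
  have d2 : (2 * w + 1) / 2 = w := by omega
  rcases covL h1 with h1 | ⟨x1, u, hu, Ru, ru⟩ | ⟨y1, a1, c1, ra⟩
  · exact .inl h1
  · rcases covR h2 with h2 | ⟨x2, v, hv, Rv, rv⟩ | ⟨z2, c2, b2, rb⟩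
    · exact .inl h2
    · exact .inl ⟨u, v, hu, hv, Ru, Rv, ru.trans rv⟩
    · exact .inl ⟨u, _, hu, le_rfl, Ru, b2,
        (ru.tail ⟨x1, z2, .inr (by simp [d2])⟩).trans rb⟩
  · rcases covR h2 with h2 | ⟨x2, v, hv, Rv, rv⟩ | ⟨z2, c2, b2, rb⟩
    · exact .inl h2
    · exact .inl ⟨_, v, le_rfl, hv, a1, Rv,
        (ra.tail ⟨y1, x2, .inl (by simp)⟩).trans rv⟩
    · have hx : R (s+1, w) → Cov R (w * 2 ^ (s+1)) (w * 2 ^ (s+1) + 2 ^ (s+1) - 1) := fun x2 =>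
        ⟨_, _, le_rfl, le_rfl, a1, b2, ((ra.tail ⟨y1, x2, .inl (by simp)⟩).tail
          ⟨x2, z2, .inr (by simp [d2])⟩).trans rb⟩
      obtain ⟨k, hk⟩ : ∃ k, k = w * 2 ^ (s+1) + 2 ^ s - 1 := ⟨_, rfl⟩
      have hk1 : w * 2 ^ (s+1) + 2 ^ s = k + 1 := by omega
      rw [← hk] at c1
      rw [hk1] at c2
      have hkb : k + 1 < 2 ^ h := by
        have := hR.bd _ c2
        simpa using this.2
      have hN : 2 * k + 2 < NN h := by
        have : 2 ^ (h+1) = 2 * 2 ^ h := by rw [pow_succ']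
        unfold NN; omega
      have hc1 : Cov R' k k → Cov R' (w * 2 ^ (s+1)) (w * 2 ^ (s+1) + 2 ^ (s+1) - 1) := by
        rintro ⟨u, v, hu, hv, Ru, Rv, hr⟩
        have : u ≠ k := by rintro rfl; exact far.eq _ c1 Ru
        have : v ≠ k := by rintro rfl; exact far.eq _ c1 Rv
        by_cases h3 : w * 2 ^ (s+1) ≤ u
        · have := treach_exit hr ((uy _).2 (by omega)) (mt (uy v).1 (by omega))
          exact (far.eq _ y1 this.1).elim
        · by_cases h4 : w * 2 ^ (s+1) + 2 ^ (s+1) - 1 ≤ v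
          · exact ⟨u, v, by omega, h4, Ru, Rv, hr⟩
          · have := treach_exit hr.symm ((ux _).2 (by omega)) (mt (ux u).1 (by omega))
            exact (far.up _ _ y1 (d1.symm ▸ this.1)).elim
      have hc2 : Cov R' (k+1) (k+1) →
          Cov R' (w * 2 ^ (s+1)) (w * 2 ^ (s+1) + 2 ^ (s+1) - 1) := by
        rintro ⟨u, v, hu, hv, Ru, Rv, hr⟩
        have : u ≠ k+1 := by rintro rfl; exact far.eq _ c2 Ru
        have : v ≠ k+1 := by rintro rfl; exact far.eq _ c2 Rv
        by_cases h3 : v ≤ w * 2 ^ (s+1) + 2 ^ (s+1) - 1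
        · have := treach_exit hr.symm ((uz _).2 (by omega)) (mt (uz u).1 (by omega))
          exact (far.eq _ z2 this.1).elim
        · by_cases h4 : u ≤ w * 2 ^ (s+1)
          · exact ⟨u, v, by omega, by omega, Ru, Rv, hr⟩
          · have := treach_exit hr ((ux _).2 (by omega)) (mt (ux v).1 (by omega))
            exact (far.up _ _ y1 (d1.symm ▸ this.1)).elim
      by_cases g1 : c (2 * k)
      · exact .inr (hc1 (hR'.f1 k (by omega) fun h => f0 _ (by omega) ⟨g1, h⟩))
      by_cases g2 : c (2 * k + 1)
      · rcases hR'.f2 k hkb fun h => f0 _ (by omega) ⟨g2, h⟩ with h | h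
        · exact .inr (hc1 h)
        · exact .inr (hc2 h)
      by_cases g3 : c (2 * k + 2)
      · exact .inr (hc2 (hR'.f1 (k+1) (by omega) fun h => f0 (2*k+2) (by omega) ⟨g3, h⟩))
      left
      obtain ⟨u, v, hu, hv, Ru, Rv, hr⟩ := hR.f3 k hkb g1 g2 g3
      by_cases h3 : w * 2 ^ (s+1) ≤ u
      · have := treach_exit hr ((uy _).2 (by omega)) (mt (uy v).1 (by omega))
        rw [d1] at this
        exact hx this.2.1
      · by_cases h4 : w * 2 ^ (s+1) + 2 ^ (s+1) - 1 ≤ v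
        · exact ⟨u, v, by omega, h4, Ru, Rv, hr⟩
        · have := treach_exit hr.symm ((ux _).2 (by omega)) (mt (ux u).1 (by omega))
          exact hx this.1

theorem diff_case {s w : ℕ} {R R' : ℕ × ℕ → Prop} (far : Far R R')
    (h1 : Cov R (w * 2 ^ (s+1)) (w * 2 ^ (s+1) + 2 ^ s - 1))
    (h2 : Cov R' (w * 2 ^ (s+1) + 2 ^ s) (w * 2 ^ (s+1) + 2 ^ (s+1) - 1)) :
    Cov R (w * 2 ^ (s+1)) (w * 2 ^ (s+1) + 2 ^ (s+1) - 1) ∨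
    Cov R' (w * 2 ^ (s+1)) (w * 2 ^ (s+1) + 2 ^ (s+1) - 1) := by
  have d1 : 2 * w / 2 = w := by omega
  have d2 : (2 * w + 1) / 2 = w := by omega
  rcases covL h1 with h1 | ⟨x1, -⟩ | ⟨y1, -⟩
  · exact .inl h1
  · rcases covR h2 with h2 | ⟨x2, -⟩ | ⟨z2, -⟩
    · exact .inr h2
    · exact (far.eq _ x1 x2).elim
    · exact (far.dn _ _ z2 (d2.symm ▸ x1)).elim
  · rcases covR h2 with h2 | ⟨x2, -⟩ | ⟨z2, -⟩
    · exact .inr h2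
    · exact (far.up _ _ y1 (d1.symm ▸ x2)).elim
    · exact (far.sib _ _ y1 z2).elim

theorem abstract_main {h : ℕ} (hh : 1 ≤ h) {P Q : ℕ × ℕ → Prop} {c c' : ℕ → Prop}
    (hP : Fs h P c) (hQ : Fs h Q c') (far : Far P Q)
    (f0 : ∀ t, t < NN h → ¬ (c t ∧ c' t)) : False := by
  have f0' : ∀ t, t < NN h → ¬ (c' t ∧ c t) := fun t ht x => f0 t ht x.symm
  have key : ∀ s, s ≤ h → ∀ w, w < 2 ^ (h - s) →
      Cov P (w * 2 ^ s) (w * 2 ^ s + 2 ^ s - 1) ∨ Cov Q (w * 2 ^ s) (w * 2 ^ s + 2 ^ s - 1) := by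
    intro s
    induction s with
    | zero =>
      intro _ w hw
      simp at hw ⊢
      have : 2 * w < NN h := by
        have : 2 ^ (h+1) = 2 * 2 ^ h := by rw [pow_succ']
        unfold NN; omega
      by_cases g : c (2 * w)
      · exact .inr (hQ.f1 w hw fun x => f0 _ this ⟨g, x⟩)
      · exact .inl (hP.f1 w hw g)
    | succ s ih =>
      intro hs w hw
      have e1 : 2 ^ (s+1) = 2 * 2 ^ s := by rw [pow_succ']
      have e3 : 2 ^ (h - s) = 2 * 2 ^ (h - (s+1)) := by
        rw [← pow_succ']; congr 1; omega
      have i1 := ih (by omega) (2 * w) (by omega)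
      have i2 := ih (by omega) (2 * w + 1) (by omega)
      have x1 : 2 * w * 2 ^ s = w * 2 ^ (s+1) := by rw [e1]; ring
      have x2 : (2 * w + 1) * 2 ^ s = w * 2 ^ (s+1) + 2 ^ s := by rw [e1]; ring
      have x3 : w * 2 ^ (s+1) + 2 ^ s + 2 ^ s - 1 = w * 2 ^ (s+1) + 2 ^ (s+1) - 1 := by omega
      rw [x1] at i1
      rw [x2, x3] at i2
      rcases i1 with i1 | i1 <;> rcases i2 with i2 | i2
      · exact same_case hP hQ far f0 hs hw i1 i2
      · exact diff_case far i1 i2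
      · exact (diff_case far.symm i1 i2).symm
      · exact (same_case hQ hP far.symm f0' hs hw i1 i2).symm
  have fin : ∀ R c, Fs h R c → ¬ Cov R 0 (2 ^ h - 1) := by
    rintro R c hR ⟨u, v, hu, hv, Ru, Rv, hr⟩
    have h1 := (hR.bd _ Rv).2
    simp only [Nat.sub_zero] at h1
    have e : 2 ^ h = 2 * 2 ^ (h - 1) := by rw [← pow_succ']; congr 1; omega
    have e2 : 1 ≤ 2 ^ (h-1) := Nat.one_le_two_pow
    have := treach_exit (s := h - 1) (w := 0) hr (under_leaf.2 (by omega))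
      (mt under_leaf.1 (by omega))
    have := (hR.bd _ this.2.1).1
    simp at this
    omega
  have := key h le_rfl 0 (by simp)
  simp only [Nat.zero_mul, Nat.zero_add] at this
  rcases this with h | h
  · exact fin _ _ hP h
  · exact fin _ _ hQ h

end Ghdm

namespace Ghdm

def lev : Raw → ℕ
  | .path _ => 1
  | .tree j _ _ => j
  | .spine j _ _ _ _ _ => j

def lo (h d : ℕ) : Raw → ℕ
  | .path k => k / (d + 1)
  | .tree j i p => if p = List.replicate h true then i * NN h ^ (j - 1)
      else (i - 1) * NN h ^ (j - 1)
  | .spine j i _ _ _ _ => (i - 1) * NN h ^ (j - 1)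

def hi (h d : ℕ) : Raw → ℕ
  | .path k => (k + d) / (d + 1)
  | .tree j i p => if p = List.replicate h false then (i - 1) * NN h ^ (j - 1)
      else i * NN h ^ (j - 1)
  | .spine j i _ _ _ _ => i * NN h ^ (j - 1)

theorem rep_ne {h : ℕ} (hh : 1 ≤ h) : List.replicate h true ≠ List.replicate h false := by
  obtain ⟨h, rfl⟩ : ∃ k, h = k + 1 := ⟨h - 1, by omega⟩
  simp [List.replicate_succ]

theorem lo_le_hi {h d : ℕ} (hh : 1 ≤ h) (x : Raw) : lo h d x ≤ hi h d x := by
  cases x with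
  | path k => exact Nat.div_le_div_right (by omega)
  | tree j i p =>
    simp only [lo, hi]
    split_ifs with h1 h2
    · exact absurd (h1.symm.trans h2) (rep_ne hh)
    · exact le_rfl
    · exact le_rfl
    · exact Nat.mul_le_mul_right _ (by omega)
  | spine j i => exact Nat.mul_le_mul_right _ (by omega)

theorem NN_ge {h : ℕ} (hh : 1 ≤ h) : 3 ≤ NN h := by
  have : 2 ^ 2 ≤ 2 ^ (h+1) := Nat.pow_le_pow_right (by omega) (by omega)
  unfold NN; omega

theorem NN_eq (h : ℕ) : NN h + 1 = 2 * 2 ^ h := by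
  have : 2 ^ (h+1) = 2 * 2 ^ h := by rw [pow_succ']
  have e4 : 1 ≤ 2 ^ h := Nat.one_le_two_pow
  unfold NN; omega

theorem nb_succ (n u : ℕ) : natToBits (n+1) u = natToBits n (u/2) ++ [u.testBit 0] := by
  unfold natToBits
  rw [List.range_succ, List.map_append]
  congr 1
  · apply List.map_congr_left
    intro a ha
    rw [List.mem_range] at ha
    rw [Nat.testBit_div_two]
    congr 1; omega
  · simp

theorem nb_len (n u : ℕ) : (natToBits n u).length = n := by simp [natToBits]

theorem nb_inj {n u v : ℕ} (hu : u < 2 ^ n) (hv : v < 2 ^ n)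
    (h : natToBits n u = natToBits n v) : u = v := by
  induction n generalizing u v with
  | zero => simp at hu hv; omega
  | succ n ih =>
    rw [nb_succ, nb_succ] at h
    have h' := List.append_inj' h rfl
    rw [pow_succ'] at hu hv
    have h1 := ih (by omega) (by omega) h'.1
    have h2 := h'.2
    simp [Nat.testBit_zero] at h2
    omega

theorem nb_surj (p : List Bool) : ∃ u, u < 2 ^ p.length ∧ p = natToBits p.length u := by
  induction p using List.reverseRecOn with
  | nil => exact ⟨0, by simp, by simp [natToBits]⟩
  | append_singleton p b ih =>
    obtain ⟨u, hu, hp⟩ := ih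
    refine ⟨2 * u + b.toNat, ?_, ?_⟩
    · have := b.toNat_lt
      simp [pow_succ']; omega
    · rw [List.length_append, List.length_singleton, nb_succ]
      have : (2 * u + b.toNat) / 2 = u := by have := b.toNat_lt; omega
      rw [this, ← hp]
      cases b <;> simp [Nat.testBit_zero]

theorem nb_false (n : ℕ) : natToBits n 0 = List.replicate n false := by
  induction n with
  | zero => simp [natToBits]
  | succ n ih => rw [nb_succ, List.replicate_succ', Nat.zero_div, ih]; simp

theorem nb_true (n : ℕ) : natToBits n (2 ^ n - 1) = List.replicate n true := by
  induction n with
  | zero => simp [natToBits]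
  | succ n ih =>
    have e4 : 1 ≤ 2 ^ n := Nat.one_le_two_pow
    have : (2 ^ (n+1) - 1) / 2 = 2 ^ n - 1 := by rw [pow_succ']; omega
    rw [nb_succ, List.replicate_succ', this, ih, Nat.testBit_zero, pow_succ']
    congr 2
    simp; omega

/-- node at height `s`, index `u`, of the level `e` tree number `q` (0-based) -/
def nd (h m e q s u : ℕ) : Raw := canon h m (.tree e (q + 1) (natToBits (h - s) u))

theorem nb_eq_false {h s u : ℕ} (hs : s < h) (hu : u < 2 ^ (h - s)) :
    natToBits (h - s) u = List.replicate h false ↔ s = 0 ∧ u = 0 := by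
  constructor
  · intro e
    have := congrArg List.length e
    rw [nb_len, List.length_replicate] at this
    have : s = 0 := by omega
    subst this
    refine ⟨rfl, nb_inj hu (by positivity) ?_⟩
    rw [e, Nat.sub_zero, nb_false]
  · rintro ⟨rfl, rfl⟩
    rw [Nat.sub_zero, nb_false]

theorem nb_eq_true {h s u : ℕ} (hs : s < h) (hu : u < 2 ^ (h - s)) :
    natToBits (h - s) u = List.replicate h true ↔ s = 0 ∧ u = 2 ^ h - 1 := by
  constructor
  · intro e
    have := congrArg List.length e
    rw [nb_len, List.length_replicate] at this
    have : s = 0 := by omega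
    subst this
    have e4 : 1 ≤ 2 ^ h := Nat.one_le_two_pow
    refine ⟨rfl, nb_inj hu (by simp) ?_⟩
    rw [e, Nat.sub_zero, nb_true]
  · rintro ⟨rfl, rfl⟩
    rw [Nat.sub_zero, nb_true]

theorem nb_ne_nil {h s u : ℕ} (hs : s < h) : natToBits (h - s) u ≠ [] := by
  intro e
  have := congrArg List.length e
  rw [nb_len] at this; simp at this; omega

theorem nd_eq {h m e q s u : ℕ} (hs : s < h) (hu : u < 2 ^ (h - s)) :
    nd h m e q s u = if s = 0 ∧ u = 0 ∧ 0 < q then .tree e q (List.replicate h true)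
      else .tree e (q + 1) (natToBits (h - s) u) := by
  unfold nd canon
  simp only [nb_ne_nil hs, if_false, nb_eq_false hs hu]
  by_cases h1 : s = 0 ∧ u = 0 ∧ 0 < q
  · rw [if_pos (by omega), if_pos h1, Nat.add_sub_cancel]
  · rw [if_neg (by omega), if_neg h1]

theorem lev_nd {h m e q s u : ℕ} (hs : s < h) (hu : u < 2 ^ (h - s)) :
    lev (nd h m e q s u) = e := by
  rw [nd_eq hs hu]; split_ifs <;> rfl

theorem lo_nd {h d m e q s u : ℕ} (hs : s < h) (hu : u < 2 ^ (h - s)) :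
    lo h d (nd h m e q s u) = if s = 0 ∧ u = 2 ^ h - 1 then (q+1) * NN h ^ (e-1)
      else q * NN h ^ (e-1) := by
  have hp : 2 ^ 1 ≤ 2 ^ h := Nat.pow_le_pow_right (by omega) (by omega)
  rw [nd_eq hs hu]
  by_cases h1 : s = 0 ∧ u = 0 ∧ 0 < q
  · rw [if_pos h1, if_neg (by omega)]; simp [lo]
  · rw [if_neg h1]; simp only [lo, nb_eq_true hs hu, Nat.add_sub_cancel]

theorem hi_nd {h d m e q s u : ℕ} (hs : s < h) (hu : u < 2 ^ (h - s)) :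
    hi h d (nd h m e q s u) = if s = 0 ∧ u = 0 then q * NN h ^ (e-1)
      else (q+1) * NN h ^ (e-1) := by
  rw [nd_eq hs hu]
  by_cases h1 : s = 0 ∧ u = 0 ∧ 0 < q
  · rw [if_pos h1, if_pos (by omega)]; simp [hi, rep_ne (show 1 ≤ h by omega)]
  · rw [if_neg h1]; simp only [hi, nb_eq_false hs hu, Nat.add_sub_cancel]

theorem nd_inj {h m e q s u s' u' : ℕ} (hs : s < h) (hu : u < 2 ^ (h - s))
    (hs' : s' < h) (hu' : u' < 2 ^ (h - s'))
    (e1 : nd h m e q s u = nd h m e q s' u') : s = s' ∧ u = u' := by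
  rw [nd_eq hs hu, nd_eq hs' hu'] at e1
  split_ifs at e1 with h1 h2 h2
  · omega
  · simp at e1
  · simp at e1
  · simp only [Raw.tree.injEq, true_and] at e1
    have := congrArg List.length e1
    rw [nb_len, nb_len] at this
    have : s = s' := by omega
    subst this
    exact ⟨rfl, nb_inj hu hu' e1⟩

def vel (h d m jv g e : ℕ) : Raw := canon h m (VsetElem h d jv g e)

theorem vel_eq {h d m jv g e : ℕ} (hh : 1 ≤ h) : vel h d m jv g e = VsetElem h d jv g e := by
  unfold vel VsetElem
  have : h ≠ 0 := by omega
  split_ifs with h1 h2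
  · rfl
  · simp [canon, this]
  · simp [canon, this, rep_ne hh]

theorem lev_vel {h d m jv g e : ℕ} (hh : 1 ≤ h) : lev (vel h d m jv g e) = e := by
  rw [vel_eq hh]; unfold VsetElem
  split_ifs <;> simp [lev, *]

theorem lohi_vel {h d m jv g e : ℕ} (hh : 1 ≤ h) (he : 1 ≤ e) (hj : e ≤ jv) :
    lo h d (vel h d m jv g e) = (g-1) * NN h ^ (jv-1) ∧
    hi h d (vel h d m jv g e) = (g-1) * NN h ^ (jv-1) := by
  have := NN_ge hh
  rw [vel_eq hh]; unfold VsetElem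
  split_ifs with h1 h2
  · simp only [lo, hi]
    refine ⟨Nat.mul_div_cancel _ (by omega), ?_⟩
    rw [Nat.mul_comm, Nat.mul_add_div (by omega), Nat.div_eq_of_lt (by omega), Nat.add_zero]
  · have : g - 1 = 0 := by
      rcases Nat.mul_eq_zero.1 h2 with h3 | h3
      · exact h3
      · have := Nat.pow_pos (n := jv - e) (show 0 < NN h by omega); omega
    simp [lo, hi, this, (rep_ne hh).symm]
  · have : (g-1) * NN h ^ (jv-e) * NN h ^ (e-1) = (g-1) * NN h ^ (jv-1) := by
      rw [Nat.mul_assoc, ← pow_add]; congr 2; omega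
    simp [lo, hi, rep_ne hh, this]

def SpC (h e k t f : ℕ) : Prop :=
  2 ≤ e ∧ 1 ≤ k ∧ k ≤ 2 ^ h ∧ (t = 2 * k - 2 ∨ t = 2 * k + 1) ∧ 1 ≤ t ∧ t ≤ 2 ^ (h + 1) ∧
    1 ≤ f ∧ f ≤ e - 1

theorem SpC.t_bd {h e k t f : ℕ} (H : SpC h e k t f) : 2 ≤ t ∧ t ≤ NN h := by
  obtain ⟨h1, h2, h3, h4, h5, h6, h7, h8⟩ := H
  have := NN_eq h
  rw [pow_succ'] at h6
  omega

/-- classification of edges -/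
inductive EC (h d m : ℕ) : ℕ → ℕ → Raw → Raw → Prop
  | base (k : ℕ) : EC h d m 1 (k / (d+1)) (.path k) (.path (k+1))
  | child (e q s u : ℕ) : 2 ≤ e → s + 1 < h → u < 2 ^ (h - s) →
      EC h d m e q (nd h m e q (s+1) (u/2)) (nd h m e q s u)
  | step (e q k t f s : ℕ) : SpC h e k t f →
      EC h d m e q (.spine e (q+1) k t f s) (.spine e (q+1) k t f (s+1))
  | leaf (e q k t f s : ℕ) : SpC h e k t f →
      EC h d m e q (nd h m e q 0 (k-1)) (.spine e (q+1) k t f s)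
  | down (e q k t f s : ℕ) : SpC h e k t f →
      EC h d m e q (.spine e (q+1) k t f s) (vel h d m (e-1) (q * NN h + t) f)
  | short (e q k t f : ℕ) : SpC h e k t f →
      EC h d m e q (nd h m e q 0 (k-1)) (vel h d m (e-1) (q * NN h + t) f)

theorem canon_valid_tree {h d m j i : ℕ} {p : List Bool} (hv : Valid h d m (canon h m (.tree j i p)))
    (hr : canon h m (.tree j i p) ≠ RootR m) : p ≠ [] ∧ 2 ≤ j ∧ 1 ≤ i := by
  simp only [canon] at hv hr
  split_ifs at hv hr with h1 h2
  · exact absurd rfl hr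
  · exact ⟨h1, hv.1, by omega⟩
  · exact ⟨h1, hv.1, hv.2.2.1⟩

theorem classify {h d m : ℕ} {x y : Raw} (hx : Valid h d m x) (hy : Valid h d m y)
    (hxr : x ≠ RootR m) (hyr : y ≠ RootR m) (hr : rel h d m x y) : ∃ e q, EC h d m e q x y := by
  obtain ⟨a, b, hab, rfl, rfl⟩ := hr
  cases hab with
  | base k => exact ⟨_, _, .base k⟩
  | child j i p b hp =>
    obtain ⟨h1, h2, h3⟩ := canon_valid_tree hx hxr
    obtain ⟨i, rfl⟩ : ∃ q, i = q + 1 := ⟨i - 1, by omega⟩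
    obtain ⟨u, hu, e⟩ := nb_surj (p ++ [b])
    have hl : (p ++ [b]).length = h - (h - p.length - 1) := by simp; omega
    have hp0 : p.length ≠ 0 := by simpa using h1
    rw [hl] at hu e
    have e2 : p = natToBits (h - (h - p.length - 1 + 1)) (u/2) := by
      have h4 : h - (h - p.length - 1) = (h - (h - p.length - 1 + 1)) + 1 := by omega
      rw [h4, nb_succ] at e
      exact (List.append_inj' e rfl).1
    have := EC.child (d := d) (m := m) j i (h - p.length - 1) u h2 (by omega) hu
    unfold nd at this
    rw [← e2, ← e] at this
    exact ⟨_, _, this⟩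
  | step j i k t e s =>
    simp only [canon] at hx hy ⊢
    obtain ⟨h1, h2, h3, h4, h5⟩ := hx
    obtain ⟨i, rfl⟩ : ∃ q, i = q + 1 := ⟨i - 1, by omega⟩
    exact ⟨_, _, .step _ _ _ _ _ _ ⟨h1, by tauto⟩⟩
  | toLeaf j i k t e =>
    have hy' := hy
    simp only [canon] at hy'
    obtain ⟨h1, h2, h3, h4, h5⟩ := hy'
    obtain ⟨i, rfl⟩ : ∃ q, i = q + 1 := ⟨i - 1, by omega⟩
    exact ⟨_, _, .leaf _ _ _ _ _ _ ⟨h1, by tauto⟩⟩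
  | toV j i k t e =>
    have hx' := hx
    simp only [canon] at hx'
    obtain ⟨h1, h2, h3, h4, h5⟩ := hx'
    obtain ⟨i, rfl⟩ : ∃ q, i = q + 1 := ⟨i - 1, by omega⟩
    exact ⟨_, _, .down _ _ _ _ _ _ ⟨h1, by tauto⟩⟩
  | short j i k t e hd h1 h2 h3 h4 h5 h6 h7 =>
    obtain ⟨g1, g2, g3⟩ := canon_valid_tree hx hxr
    obtain ⟨i, rfl⟩ : ∃ q, i = q + 1 := ⟨i - 1, by omega⟩
    exact ⟨_, _, .short _ _ _ _ _ ⟨g2, h1, h2, h3, h4, h5, h6, h7⟩⟩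

/-- the copy `i` (0-based) of level `c` -/
def Reg (h d c i : ℕ) : Set Raw :=
  {w | lev w ≤ c ∧ i * NN h ^ (c-1) ≤ lo h d w ∧ hi h d w ≤ (i+1) * NN h ^ (c-1)}

theorem reg_top {h d m c i : ℕ} (hh : 1 ≤ h) (hc : 2 ≤ c) {w : Raw} (hw : Valid h d m w)
    (hr : w ≠ RootR m) (hm : w ∈ Reg h d c i) (hl : lev w = c) :
    (∃ s u, s < h ∧ u < 2 ^ (h - s) ∧ w = nd h m c i s u) ∨
    ∃ k t f s, SpC h c k t f ∧ w = .spine c (i+1) k t f s := by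
  have hN := NN_ge hh
  have hM : 0 < NN h ^ (c-1) := Nat.pow_pos (by omega)
  obtain ⟨-, hlo, hhi⟩ := hm
  cases w with
  | path k => simp [lev] at hl; omega
  | tree e j p =>
    simp only [lev] at hl
    subst hl
    left
    obtain ⟨h1, h2, h3, h4, h5, h6, h7⟩ := hw
    have hp : p ≠ [] := by
      intro hp; obtain ⟨rfl, rfl⟩ := h6 hp
      exact hr (by rw [hp]; rfl)
    have hp0 : p.length ≠ 0 := by simpa using hp
    simp only [lo, hi] at hlo hhi
    by_cases hj : j = i + 1
    · obtain ⟨u, hu, e⟩ := nb_surj p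
      have hl : p.length = h - (h - p.length) := by omega
      rw [hl] at hu e
      refine ⟨h - p.length, u, by omega, hu, ?_⟩
      rw [nd_eq (by omega) hu, if_neg, hj, ← e]
      rintro ⟨g1, g2, g3⟩
      have := h7 (by rw [e]; exact (nb_eq_false (by omega) hu).2 ⟨g1, g2⟩) hp
      omega
    · split_ifs at hlo hhi with g1 g2 g2
      · exact absurd (g1.symm.trans g2) (rep_ne hh)
      · have a1 := Nat.le_of_mul_le_mul_right hlo hM
        have a2 := Nat.le_of_mul_le_mul_right hhi hM
        have : j = i := by omega
        subst this
        refine ⟨0, 0, by omega, by positivity, ?_⟩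
        rw [nd_eq (by omega) (by positivity), if_pos ⟨rfl, rfl, by omega⟩, g1]
      · have a1 := Nat.le_of_mul_le_mul_right hlo hM
        have := h7 g2 hp
        omega
      · have a1 := Nat.le_of_mul_le_mul_right hlo hM
        have a2 := Nat.le_of_mul_le_mul_right hhi hM
        omega
  | spine e j k t f s =>
    simp only [lev] at hl
    subst hl
    right
    obtain ⟨h1, h2, h3, h4, h5⟩ := hw
    simp only [lo, hi] at hlo hhi
    have a1 := Nat.le_of_mul_le_mul_right hlo hM
    have a2 := Nat.le_of_mul_le_mul_right hhi hM
    have : j = i + 1 := by omega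
    subst this
    exact ⟨k, t, f, s, ⟨h1, by tauto⟩, rfl⟩

end Ghdm

namespace Ghdm

theorem ec_lev {h d m e q : ℕ} {x y : Raw} (hh : 1 ≤ h) (H : EC h d m e q x y) : lev x = e := by
  cases H with
  | base k => rfl
  | child _ _ s u h1 h2 h3 =>
    apply lev_nd h2
    have : h - s = (h - (s+1)) + 1 := by omega
    rw [this, pow_succ'] at h3; omega
  | step _ _ k t f s H => rfl
  | leaf _ _ k t f s H => exact lev_nd (by omega) (by have := H.2.1; have := H.2.2.1; simp; omega)
  | down _ _ k t f s H => rfl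
  | short _ _ k t f H => exact lev_nd (by omega) (by have := H.2.1; have := H.2.2.1; simp; omega)

theorem nd_reg {h d m e q s u : ℕ} (hs : s < h) (hu : u < 2 ^ (h - s)) :
    nd h m e q s u ∈ Reg h d e q := by
  refine ⟨(lev_nd hs hu).le, ?_, ?_⟩
  · rw [lo_nd hs hu]; split_ifs
    · exact Nat.mul_le_mul_right _ (by omega)
    · exact le_rfl
  · rw [hi_nd hs hu]; split_ifs
    · exact Nat.mul_le_mul_right _ (by omega)
    · exact le_rfl

theorem spine_reg {h d e q k t f s : ℕ} : Raw.spine e (q+1) k t f s ∈ Reg h d e q := by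
  refine ⟨le_rfl, ?_, ?_⟩ <;> simp [lo, hi]

theorem vel_pos {h d m e q k t f : ℕ} (hh : 1 ≤ h) (H : SpC h e k t f) :
    lev (vel h d m (e-1) (q * NN h + t) f) ≤ e - 1 ∧
    lo h d (vel h d m (e-1) (q * NN h + t) f) = (q * NN h + (t - 1)) * NN h ^ (e-1-1) ∧
    hi h d (vel h d m (e-1) (q * NN h + t) f) = (q * NN h + (t - 1)) * NN h ^ (e-1-1) := by
  have := H.t_bd
  obtain ⟨h1, h2, h3, h4, h5, h6, h7, h8⟩ := H
  have := lohi_vel (d := d) (m := m) (g := q * NN h + t) hh h7 h8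
  rw [lev_vel hh, this.1, this.2]
  have : q * NN h + t - 1 = q * NN h + (t - 1) := by omega
  rw [this]; exact ⟨h8, rfl, rfl⟩

theorem pow_lev {h e : ℕ} (he : 2 ≤ e) : NN h ^ (e-1) = NN h * NN h ^ (e-1-1) := by
  rw [← pow_succ']; congr 1; omega

theorem vel_mid {h d m e q k t f : ℕ} (hh : 1 ≤ h) (H : SpC h e k t f) :
    q * NN h ^ (e-1) < lo h d (vel h d m (e-1) (q * NN h + t) f) ∧
    hi h d (vel h d m (e-1) (q * NN h + t) f) < (q+1) * NN h ^ (e-1) := by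
  have h0 := H.t_bd
  obtain ⟨-, h2, h3⟩ := vel_pos (d := d) (m := m) (q := q) hh H
  have hM : 0 < NN h ^ (e-1-1) := Nat.pow_pos (by have := NN_ge hh; omega)
  rw [h2, h3, pow_lev H.1, ← Nat.mul_assoc, ← Nat.mul_assoc, Nat.add_mul q 1]
  exact ⟨Nat.mul_lt_mul_of_pos_right (by omega) hM, Nat.mul_lt_mul_of_pos_right (by omega) hM⟩

theorem vel_reg {h d m e q k t f : ℕ} (hh : 1 ≤ h) (H : SpC h e k t f) :
    vel h d m (e-1) (q * NN h + t) f ∈ Reg h d e q := by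
  have h1 := vel_mid (d := d) (m := m) (q := q) hh H
  have h2 := lo_le_hi (d := d) hh (vel h d m (e-1) (q * NN h + t) f)
  exact ⟨by have := (vel_pos (d := d) (m := m) (q := q) hh H).1; omega, by omega, by omega⟩

theorem SpC.k_bd {h e k t f : ℕ} (H : SpC h e k t f) : k - 1 < 2 ^ (h - 0) := by
  have := H.2.1; have := H.2.2.1; simp; omega

theorem half_lt {h s u : ℕ} (h2 : s + 1 < h) (h3 : u < 2 ^ (h - s)) : u / 2 < 2 ^ (h - (s+1)) := by
  have : h - s = (h - (s+1)) + 1 := by omega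
  rw [this, pow_succ'] at h3; omega

theorem ec_reg {h d m e q : ℕ} {x y : Raw} (hh : 1 ≤ h) (H : EC h d m e q x y) :
    1 ≤ e ∧ x ∈ Reg h d e q ∧ y ∈ Reg h d e q := by
  cases H with
  | base k =>
    have e1 : (k + 1 + d) / (d+1) = k / (d+1) + 1 := by
      rw [show k + 1 + d = k + (d+1) by ring, Nat.add_div_right _ (by omega)]
    refine ⟨le_rfl, ⟨le_rfl, ?_, ?_⟩, ⟨le_rfl, ?_, ?_⟩⟩ <;> simp only [lo, hi] <;> simp
    · rw [← e1]; exact Nat.div_le_div_right (by omega)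
    · exact Nat.div_le_div_right (by omega)
    · exact e1.le
  | child _ _ s u h1 h2 h3 => exact ⟨by omega, nd_reg h2 (half_lt h2 h3), nd_reg (by omega) h3⟩
  | step _ _ k t f s H => exact ⟨by have := H.1; omega, spine_reg, spine_reg⟩
  | leaf _ _ k t f s H => exact ⟨by have := H.1; omega, nd_reg (by omega) H.k_bd, spine_reg⟩
  | down _ _ k t f s H => exact ⟨by have := H.1; omega, spine_reg, vel_reg hh H⟩
  | short _ _ k t f H => exact ⟨by have := H.1; omega, nd_reg (by omega) H.k_bd, vel_reg hh H⟩

theorem ec_mid {h d m e q : ℕ} {x y : Raw} (hh : 1 ≤ h) (he : 2 ≤ e) (H : EC h d m e q x y) :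
    ∃ z, (z = x ∨ z = y) ∧ q * NN h ^ (e-1) < hi h d z ∧ lo h d z < (q+1) * NN h ^ (e-1) := by
  have hM : 0 < NN h ^ (e-1) := Nat.pow_pos (by have := NN_ge hh; omega)
  have h0 : q * NN h ^ (e-1) < (q+1) * NN h ^ (e-1) := Nat.mul_lt_mul_of_pos_right (by omega) hM
  have sp : ∀ k t f s, q * NN h ^ (e-1) < hi h d (.spine e (q+1) k t f s) ∧
      lo h d (.spine e (q+1) k t f s) < (q+1) * NN h ^ (e-1) := by
    intros; simpa [lo, hi] using h0
  cases H with
  | base k => omega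
  | child _ _ s u h1 h2 h3 =>
    refine ⟨_, .inl rfl, ?_, ?_⟩
    · rw [hi_nd h2 (half_lt h2 h3), if_neg (by omega)]; exact h0
    · rw [lo_nd h2 (half_lt h2 h3), if_neg (by omega)]; exact h0
  | step _ _ k t f s H => exact ⟨_, .inl rfl, sp _ _ _ _⟩
  | leaf _ _ k t f s H => exact ⟨_, .inr rfl, sp _ _ _ _⟩
  | down _ _ k t f s H => exact ⟨_, .inl rfl, sp _ _ _ _⟩
  | short _ _ k t f H =>
    have h1 := vel_mid (d := d) (m := m) (q := q) hh H
    have h2 := lo_le_hi (d := d) hh (vel h d m (e-1) (q * NN h + t) f)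
    exact ⟨_, .inr rfl, by omega, by omega⟩

theorem reg_mono {h d e q c : ℕ} (he : 1 ≤ e) (hc : e ≤ c) {x : Raw} (hx : x ∈ Reg h d e q) :
    x ∈ Reg h d c (q / NN h ^ (c - e)) := by
  obtain ⟨h1, h2, h3⟩ := hx
  have e1 : NN h ^ (c-1) = NN h ^ (c-e) * NN h ^ (e-1) := by rw [← pow_add]; congr 1; omega
  rcases Nat.eq_zero_or_pos (NN h ^ (c-e)) with h0 | h0
  · have := NN_eq h
    have e4 : 1 ≤ 2 ^ h := Nat.one_le_two_pow
    have : 0 < NN h ^ (c - e) := Nat.pow_pos (by omega)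
    omega
  refine ⟨by omega, ?_, ?_⟩
  · rw [e1, ← Nat.mul_assoc]
    exact (Nat.mul_le_mul_right _ (Nat.div_mul_le_self _ _)).trans h2
  · rw [e1, ← Nat.mul_assoc]
    refine h3.trans (Nat.mul_le_mul_right _ ?_)
    exact Nat.lt_mul_of_div_lt (Nat.lt_succ_self _) h0

theorem sub_edge {h d m c i e q : ℕ} {x y : Raw} (hh : 1 ≤ h) (hc : 2 ≤ c)
    (hx : x ∈ Reg h d c i) (hy : y ∈ Reg h d c i) (H : EC h d m e q x y) :
    (∃ t, t < NN h ∧ x ∈ Reg h d (c-1) (i * NN h + t) ∧ y ∈ Reg h d (c-1) (i * NN h + t)) ∨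
    EC h d m c i x y := by
  have hN := NN_ge hh
  have hM : 0 < NN h ^ (c-1) := Nat.pow_pos (by omega)
  have hM' : 0 < NN h ^ (c-1-1) := Nat.pow_pos (by omega)
  have hl := ec_lev hh H
  obtain ⟨he, rx, ry⟩ := ec_reg hh H
  rcases (show e < c ∨ e = c by have := hx.1; omega) with h1 | rfl
  · left
    have rx' := reg_mono he (show e ≤ c - 1 by omega) rx
    have ry' := reg_mono he (show e ≤ c - 1 by omega) ry
    generalize q / NN h ^ (c - 1 - e) = j at rx' ry'
    have lx := lo_le_hi (d := d) hh x
    have ly := lo_le_hi (d := d) hh y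
    obtain ⟨-, hx2, hx3⟩ := hx
    obtain ⟨-, hy2, hy3⟩ := hy
    obtain ⟨hx1, hx4, hx5⟩ := rx'
    obtain ⟨hy1, hy4, hy5⟩ := ry'
    have e1 := pow_lev (h := h) hc
    rw [e1, ← Nat.mul_assoc] at hx2 hx3 hy2 hy3
    by_cases g1 : i * NN h ≤ j
    · by_cases g2 : j < (i+1) * NN h
      · refine ⟨j - i * NN h, ?_, ?_, ?_⟩
        · rw [Nat.add_mul] at g2; omega
        · rw [Nat.add_sub_cancel' g1]; exact ⟨hx1, hx4, hx5⟩
        · rw [Nat.add_sub_cancel' g1]; exact ⟨hy1, hy4, hy5⟩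
      · have a1 := Nat.mul_le_mul_right (NN h ^ (c-1-1)) (not_lt.1 g2)
        have a2 : i * NN h + (NN h - 1) + 1 = (i+1) * NN h := by rw [Nat.add_mul]; omega
        have a3 : (i * NN h + (NN h - 1)) * NN h ^ (c-1-1) ≤ (i+1) * NN h * NN h ^ (c-1-1) :=
          Nat.mul_le_mul_right _ (by omega)
        refine ⟨NN h - 1, by omega, ⟨hx1, ?_, ?_⟩, ⟨hy1, ?_, ?_⟩⟩ <;> (try rw [a2]) <;> omega
    · have a1 := Nat.mul_le_mul_right (NN h ^ (c-1-1)) (show j + 1 ≤ i * NN h by omega)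
      have a3 : (i * NN h) * NN h ^ (c-1-1) ≤ (i * NN h + 1) * NN h ^ (c-1-1) :=
          Nat.mul_le_mul_right _ (by omega)
      refine ⟨0, by omega, ⟨hx1, ?_, ?_⟩, ⟨hy1, ?_, ?_⟩⟩ <;> (try rw [Nat.add_zero]) <;> omega
  · right
    obtain ⟨z, hz, z1, z2⟩ := ec_mid hh hc H
    have hz' : z ∈ Reg h d e i := by rcases hz with rfl | rfl <;> assumption
    obtain ⟨-, z3, z4⟩ := hz'
    have a1 := Nat.lt_of_mul_lt_mul_right (z3.trans_lt z2)
    have a2 := Nat.lt_of_mul_lt_mul_right (z1.trans_le z4)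
    have : q = i := by omega
    subst this; exact H

def RStep (h d m c i : ℕ) (R : Set Raw) (x y : Raw) : Prop :=
  x ∈ R ∧ y ∈ R ∧ x ∈ Reg h d c i ∧ y ∈ Reg h d c i ∧ (rel h d m x y ∨ rel h d m y x)

abbrev Rch (h d m c i : ℕ) (R : Set Raw) := Relation.ReflTransGen (RStep h d m c i R)

theorem RStep.symm {h d m c i R x y} (H : RStep h d m c i R x y) : RStep h d m c i R y x :=
  ⟨H.2.1, H.1, H.2.2.2.1, H.2.2.1, H.2.2.2.2.symm⟩

theorem Rch.symm {h d m c i R x y} (H : Rch h d m c i R x y) : Rch h d m c i R y x := by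
  induction H with
  | refl => exact .refl
  | tail _ h2 ih => exact (Relation.ReflTransGen.single h2.symm).trans ih

/-- `w` is an element of level at most `c` at position `x`. -/
def At (h d c x : ℕ) (w : Raw) : Prop := lev w ≤ c ∧ lo h d w = x ∧ hi h d w = x

def Cross (h d m c i : ℕ) (R : Set Raw) : Prop :=
  ∃ u v, u ∈ R ∧ v ∈ R ∧ At h d c (i * NN h ^ (c-1)) u ∧ At h d c ((i+1) * NN h ^ (c-1)) v ∧
    Rch h d m c i R u v

def Rn (h m c i : ℕ) (R : Set Raw) (a : ℕ × ℕ) : Prop :=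
  a.1 < h ∧ a.2 < 2 ^ (h - a.1) ∧ nd h m c i a.1 a.2 ∈ R

structure Good (h d m : ℕ) (R : Set Raw) : Prop where
  valid : ∀ x ∈ R, Valid h d m x
  root : RootR m ∉ R

theorem Good.ec {h d m : ℕ} {R : Set Raw} (hR : Good h d m R) {x y : Raw} (hx : x ∈ R)
    (hy : y ∈ R) (hr : rel h d m x y) : ∃ e q, EC h d m e q x y :=
  classify (hR.valid _ hx) (hR.valid _ hy) (fun e => hR.root (e ▸ hx))
    (fun e => hR.root (e ▸ hy)) hr

theorem nd_ne_spine {h m e q s u e' q' k t f s' : ℕ} (hs : s < h) (hu : u < 2 ^ (h - s)) :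
    nd h m e q s u ≠ .spine e' q' k t f s' := by
  rw [nd_eq hs hu]; split_ifs <;> simp

theorem noncross {h d m c i : ℕ} (hh : 1 ≤ h) (hc : 2 ≤ c) {R : Set Raw} (hR : Good h d m R)
    (col : ℕ → Prop) (θ : ℕ)
    (Hc : ∀ t, t < NN h → Cross h d m (c-1) (i * NN h + t) R → (col t ↔ col (t+1)))
    (Hl : ∀ u, Rn h m c i R (0, u) → u < θ → (0 < u → ¬ col (2*u-1)) ∧ ¬ col (2*u+2))
    (Hr : ∀ u, Rn h m c i R (0, u) → θ ≤ u → (0 < u → col (2*u-1)) ∧ col (2*u+2))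
    (Hg : ∀ u v, u < θ → θ ≤ v → Rn h m c i R (0, u) → Rn h m c i R (0, v) →
      ¬ TReach (Rn h m c i R) (0, u) (0, v))
    (H0 : ¬ col 0) (HN : col (NN h)) (T0 : Rn h m c i R (0, 0) → 0 < θ)
    (TN : Rn h m c i R (0, 2 ^ h - 1) → θ ≤ 2 ^ h - 1) : ¬ Cross h d m c i R := by
  have hN := NN_ge hh
  have hM : 0 < NN h ^ (c-1) := Nat.pow_pos (by omega)
  have hM' : 0 < NN h ^ (c-1-1) := Nat.pow_pos (by omega)
  have e1 := pow_lev (h := h) hc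
  let RS : ℕ → Raw → Prop := fun t w => ∃ u ∈ R, At h d (c-1) ((i * NN h + t) * NN h ^ (c-1-1)) u ∧
    Rch h d m (c-1) (i * NN h + t) R u w
  let clr : ℕ → Raw → Prop := fun t w => (RS t w ∧ col t) ∨ (¬ RS t w ∧ col (t+1))
  let K : Raw → Prop := fun w =>
    (lev w < c ∧ ∃ t, t < NN h ∧ w ∈ Reg h d (c-1) (i * NN h + t) ∧ clr t w) ∨
    (∃ s u, Rn h m c i R (s, u) ∧ w = nd h m c i s u ∧
      ∃ v, θ ≤ v ∧ Rn h m c i R (0, v) ∧ TReach (Rn h m c i R) (s, u) (0, v)) ∨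
    (∃ k t f s, w = .spine c (i+1) k t f s ∧ col (t-1))
  have hS : ∀ t, t < NN h → ∀ w ∈ R, At h d (c-1) ((i * NN h + t) * NN h ^ (c-1-1)) w →
      (clr t w ↔ col t) := by
    intro t ht w hw ha
    have : RS t w := ⟨w, hw, ha, .refl⟩
    simp only [clr, this]; tauto
  have hT : ∀ t, t < NN h → ∀ w ∈ R, At h d (c-1) ((i * NN h + t + 1) * NN h ^ (c-1-1)) w →
      (clr t w ↔ col (t+1)) := by
    intro t ht w hw ha
    by_cases g : RS t w
    · have h1 := Hc t ht (by
        obtain ⟨u, hu, hau, hr⟩ := g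
        exact ⟨u, w, hu, hw, hau, ha, hr⟩)
      simp only [clr, g]; tauto
    · simp only [clr, g]; tauto
  have hKH : ∀ w ∈ R, ∀ t, t < NN h → w ∈ Reg h d (c-1) (i * NN h + t) → (K w ↔ clr t w) := by
    intro w hw t ht hm
    have hlv : lev w < c := by have := hm.1; omega
    constructor
    · rintro (⟨-, t', ht', hm', hcl⟩ | ⟨s, u, hn, rfl, -⟩ | ⟨k, t, f, s, rfl, -⟩)
      · have lw := lo_le_hi (d := d) hh w
        obtain ⟨l1, l2, l3⟩ := hm
        obtain ⟨l4, l5, l6⟩ := hm'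
        have a1 := Nat.le_of_mul_le_mul_right (l2.trans (lw.trans l6)) hM'
        have a2 := Nat.le_of_mul_le_mul_right (l5.trans (lw.trans l3)) hM'
        rcases (show t = t' ∨ t = t' + 1 ∨ t' = t + 1 by omega) with rfl | rfl | rfl
        · exact hcl
        · have : At h d (c-1) ((i * NN h + (t'+1)) * NN h ^ (c-1-1)) w := by
            rw [← Nat.add_assoc] at l2 ⊢
            exact ⟨l4, by omega, by omega⟩
          rw [hS _ ht w hw this]
          rwa [hT _ ht' w hw this] at hcl
        · have : At h d (c-1) ((i * NN h + (t+1)) * NN h ^ (c-1-1)) w := by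
            rw [← Nat.add_assoc] at l5 ⊢
            exact ⟨l4, by omega, by omega⟩
          rw [hT _ ht w hw this]
          rwa [hS _ ht' w hw this] at hcl
      · rw [lev_nd hn.1 hn.2.1] at hlv; omega
      · simp [lev] at hlv
    · intro hcl
      exact .inl ⟨hlv, t, ht, hm, hcl⟩
  have hKy : ∀ y, y ≤ NN h → ∀ w ∈ R, At h d (c-1) ((i * NN h + y) * NN h ^ (c-1-1)) w →
      (K w ↔ col y) := by
    intro y hy w hw ha
    rcases Nat.lt_or_ge y (NN h) with h1 | h1
    · rw [hKH w hw y h1, hS y h1 w hw ha]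
      refine ⟨ha.1, ha.2.1.ge, ha.2.2.le.trans (Nat.mul_le_mul_right _ (by omega))⟩
    · obtain ⟨t, rfl⟩ : ∃ t, y = t + 1 := ⟨y - 1, by omega⟩
      rw [hKH w hw t (by omega), hT t (by omega) w hw ha]
      refine ⟨ha.1, (Nat.mul_le_mul_right _ (by omega)).trans ha.2.1.ge, ha.2.2.le⟩
  have hKn : ∀ s u, Rn h m c i R (s, u) → (K (nd h m c i s u) ↔
      ∃ v, θ ≤ v ∧ Rn h m c i R (0, v) ∧ TReach (Rn h m c i R) (s, u) (0, v)) := by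
    intro s u hn
    constructor
    · rintro (⟨hl, -⟩ | ⟨s', u', hn', he, hv⟩ | ⟨k, t, f, s', he, -⟩)
      · rw [lev_nd hn.1 hn.2.1] at hl; omega
      · obtain ⟨rfl, rfl⟩ := nd_inj hn.1 hn.2.1 hn'.1 hn'.2.1 he
        exact hv
      · exact absurd he (nd_ne_spine hn.1 hn.2.1)
    · intro hv
      exact .inr (.inl ⟨s, u, hn, rfl, hv⟩)
  have hKl : ∀ u, Rn h m c i R (0, u) → (K (nd h m c i 0 u) ↔ θ ≤ u) := by
    intro u hn
    rw [hKn 0 u hn]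
    constructor
    · rintro ⟨v, hv, hv2, hr⟩
      by_contra h1
      exact Hg u v (by omega) hv hn hv2 hr
    · intro h1
      exact ⟨u, h1, hn, .refl⟩
  have hKs : ∀ k t f s, K (.spine c (i+1) k t f s) ↔ col (t-1) := by
    intro k t f s
    constructor
    · rintro (⟨hl, -⟩ | ⟨s', u', hn', he, hv⟩ | ⟨k, t, f, s', he, h1⟩)
      · simp [lev] at hl
      · exact absurd he.symm (nd_ne_spine hn'.1 hn'.2.1)
      · simp at he
        rw [he.2.1]; exact h1
    · intro h1
      exact .inr (.inr ⟨k, t, f, s, rfl, h1⟩)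
  have hlc : ∀ k t f, SpC h c k t f → nd h m c i 0 (k-1) ∈ R →
      (K (nd h m c i 0 (k-1)) ↔ col (t-1)) := by
    intro k t f H hk
    have hn : Rn h m c i R (0, k-1) := ⟨hh, H.k_bd, hk⟩
    rw [hKl _ hn]
    obtain ⟨h1, h2, h3, h4, h5, h6, h7, h8⟩ := H
    constructor
    · intro g
      have := Hr _ hn g
      rcases h4 with rfl | rfl
      · have h9 := this.1 (by omega)
        rwa [show 2 * (k-1) - 1 = 2 * k - 2 - 1 by omega] at h9
      · have h9 := this.2
        rwa [show 2 * (k-1) + 2 = 2 * k + 1 - 1 by omega] at h9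
    · intro g
      by_contra g2
      have := Hl _ hn (by omega)
      rcases h4 with rfl | rfl
      · have h9 := this.1 (by omega)
        rw [show 2 * (k-1) - 1 = 2 * k - 2 - 1 by omega] at h9
        exact h9 g
      · have h9 := this.2
        rw [show 2 * (k-1) + 2 = 2 * k + 1 - 1 by omega] at h9
        exact h9 g
  have hvl : ∀ k t f, SpC h c k t f → vel h d m (c-1) (i * NN h + t) f ∈ R →
      (K (vel h d m (c-1) (i * NN h + t) f) ↔ col (t-1)) := by
    intro k t f H hk
    have := H.t_bd
    exact hKy (t-1) (by omega) _ hk (vel_pos hh H)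
  have hE : ∀ x y, x ∈ R → y ∈ R → x ∈ Reg h d c i → y ∈ Reg h d c i → rel h d m x y →
      (K x ↔ K y) := by
    intro x y hx hy rx ry hr
    obtain ⟨e, q, H⟩ := hR.ec hx hy hr
    rcases sub_edge hh hc rx ry H with ⟨t, ht, hx', hy'⟩ | H
    · rw [hKH x hx t ht hx', hKH y hy t ht hy']
      have st : RStep h d m (c-1) (i * NN h + t) R x y := ⟨hx, hy, hx', hy', .inl hr⟩
      have : RS t x ↔ RS t y := by
        constructor
        · rintro ⟨u, h1, h2, h3⟩; exact ⟨u, h1, h2, h3.tail st⟩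
        · rintro ⟨u, h1, h2, h3⟩; exact ⟨u, h1, h2, h3.tail st.symm⟩
      simp only [clr, this]
    · generalize hcc : c = c' at H
      generalize hii : i = i' at H
      cases H with
      | base k => omega
      | child _ _ s u h1 h2 h3 =>
        subst hcc hii
        have n1 : Rn h m c i R (s+1, u/2) := ⟨h2, half_lt h2 h3, hx⟩
        have n2 : Rn h m c i R (s, u) := ⟨by simp; omega, h3, hy⟩
        have st : TStep (Rn h m c i R) (s, u) (s+1, u/2) := ⟨n2, n1, .inl rfl⟩
        rw [hKn _ _ n1, hKn _ _ n2]
        constructor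
        · rintro ⟨v, a, b, g⟩; exact ⟨v, a, b, .head st g⟩
        · rintro ⟨v, a, b, g⟩; exact ⟨v, a, b, .head st.symm g⟩
      | step _ _ k t f s Hs => subst hcc hii; rw [hKs, hKs]
      | leaf _ _ k t f s Hs => subst hcc hii; rw [hKs, hlc k t f Hs hx]
      | down _ _ k t f s Hs => subst hcc hii; rw [hKs, hvl k t f Hs hy]
      | short _ _ k t f Hs => subst hcc hii; rw [hlc k t f Hs hx, hvl k t f Hs hy]
  rintro ⟨a, b, ha, hb, pa, pb, hr⟩
  have hab : K a ↔ K b := by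
    clear pb hb
    induction hr with
    | refl => exact Iff.rfl
    | tail _ st ih =>
      refine ih.trans ?_
      obtain ⟨h1, h2, h3, h4, h5 | h5⟩ := st
      · exact hE _ _ h1 h2 h3 h4 h5
      · exact (hE _ _ h2 h1 h4 h3 h5).symm
  have hlt : i * NN h ^ (c-1) < (i+1) * NN h ^ (c-1) := Nat.mul_lt_mul_of_pos_right (by omega) hM
  have hKa : ¬ K a := by
    obtain ⟨l1, l2, l3⟩ := pa
    rcases Nat.lt_or_ge (lev a) c with h1 | h1
    · rw [hKy 0 (by omega) a ha ⟨by omega, ?_, ?_⟩]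
      · exact H0
      · rw [l2, e1, Nat.add_zero, Nat.mul_assoc]
      · rw [l3, e1, Nat.add_zero, Nat.mul_assoc]
    · rcases reg_top (i := i) hh hc (hR.valid a ha) (fun e => hR.root (e ▸ ha)) ⟨l1, by omega, by omega⟩
        (by omega) with ⟨s, u, hs, hu, rfl⟩ | ⟨k, t, f, s, -, rfl⟩
      · rw [hi_nd hs hu] at l3
        split_ifs at l3 with g
        · obtain ⟨rfl, rfl⟩ := g
          rw [hKl 0 ⟨hs, hu, ha⟩]
          have := T0 ⟨hs, hu, ha⟩
          omega
        · omega
      · simp [hi] at l3; omega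
  have hKb : K b := by
    obtain ⟨l1, l2, l3⟩ := pb
    rcases Nat.lt_or_ge (lev b) c with h1 | h1
    · rw [hKy (NN h) le_rfl b hb ⟨by omega, ?_, ?_⟩]
      · exact HN
      · rw [l2, e1, ← Nat.mul_assoc, Nat.add_mul i 1, Nat.one_mul]
      · rw [l3, e1, ← Nat.mul_assoc, Nat.add_mul i 1, Nat.one_mul]
    · rcases reg_top (i := i) hh hc (hR.valid b hb) (fun e => hR.root (e ▸ hb)) ⟨l1, by omega, by omega⟩
        (by omega) with ⟨s, u, hs, hu, rfl⟩ | ⟨k, t, f, s, -, rfl⟩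
      · rw [lo_nd hs hu] at l2
        split_ifs at l2 with g
        · obtain ⟨rfl, rfl⟩ := g
          rw [hKl _ ⟨hs, hu, hb⟩]
          exact TN ⟨hs, hu, hb⟩
        · omega
      · simp [lo] at l2; omega
  exact hKa (hab.2 hKb)

theorem cross_fs {h d m c i : ℕ} (hh : 1 ≤ h) (hc : 2 ≤ c) {R : Set Raw} (hR : Good h d m R)
    (hX : Cross h d m c i R) :
    Fs h (Rn h m c i R) (fun t => Cross h d m (c-1) (i * NN h + t) R) := by
  have hN := NN_eq h
  have e4 : 1 ≤ 2 ^ h := Nat.one_le_two_pow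
  refine ⟨fun a ha => ⟨ha.1, ha.2.1⟩, ?_, ?_, ?_⟩
  · intro k hk hnc
    by_contra hcov
    have hkR : ∀ u, Rn h m c i R (0, u) → u ≠ k := by
      rintro u hu rfl
      exact hcov ⟨u, u, le_rfl, le_rfl, hu, hu, .refl⟩
    refine noncross hh hc hR (fun y => 2 * k + 1 ≤ y) k ?_ ?_ ?_ ?_ ?_ ?_ ?_ ?_ hX
    · intro t ht hct
      have : t ≠ 2 * k := by rintro rfl; exact hnc hct
      omega
    · intro u hu h1; omega
    · intro u hu h1; have := hkR u hu; omega
    · intro u v h1 h2 hu hv hr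
      exact hcov ⟨u, v, by omega, h2, hu, hv, hr⟩
    · omega
    · omega
    · intro h1; have := hkR _ h1; omega
    · intro h1; have := hkR _ h1; omega
  · intro k hk hnc
    by_contra hcov
    rw [not_or] at hcov
    have hkR : ∀ u, Rn h m c i R (0, u) → u ≠ k ∧ u ≠ k + 1 := by
      intro u hu
      refine ⟨?_, ?_⟩
      · rintro rfl; exact hcov.1 ⟨u, u, le_rfl, le_rfl, hu, hu, .refl⟩
      · rintro rfl; exact hcov.2 ⟨_, _, le_rfl, le_rfl, hu, hu, .refl⟩
    refine noncross hh hc hR (fun y => 2 * k + 2 ≤ y) (k+1) ?_ ?_ ?_ ?_ ?_ ?_ ?_ ?_ hX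
    · intro t ht hct
      have : t ≠ 2 * k + 1 := by rintro rfl; exact hnc hct
      omega
    · intro u hu h1; have := hkR u hu; omega
    · intro u hu h1; have := hkR u hu; omega
    · intro u v h1 h2 hu hv hr
      exact hcov.1 ⟨u, v, by omega, by omega, hu, hv, hr⟩
    · omega
    · omega
    · intro h1; omega
    · intro h1; omega
  · intro k hk hn1 hn2 hn3
    by_contra hcov
    refine noncross hh hc hR (fun y => y = 2 * k + 1 ∨ 2 * k + 3 ≤ y) (k+1)
      ?_ ?_ ?_ ?_ ?_ ?_ ?_ ?_ hX
    · intro t ht hct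
      have : t ≠ 2 * k := by rintro rfl; exact hn1 hct
      have : t ≠ 2 * k + 1 := by rintro rfl; exact hn2 hct
      have : t ≠ 2 * k + 2 := by rintro rfl; exact hn3 hct
      omega
    · intro u hu h1; omega
    · intro u hu h1; omega
    · intro u v h1 h2 hu hv hr
      exact hcov ⟨u, v, by omega, by omega, hu, hv, hr⟩
    · omega
    · omega
    · intro h1; omega
    · intro h1; omega

end Ghdm

namespace Ghdm

def adj (h d m : ℕ) (x y : Raw) : Prop := rel h d m x y ∨ rel h d m y x

structure FarS (h d m : ℕ) (P Q : Set Raw) : Prop where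
  ne : ∀ p ∈ P, ∀ q ∈ Q, p ≠ q
  nadj : ∀ p ∈ P, ∀ q ∈ Q, ¬ adj h d m p q
  nmid : ∀ p ∈ P, ∀ q ∈ Q, ∀ z, Valid h d m z → adj h d m p z → adj h d m z q → False

theorem FarS.symm {h d m : ℕ} {P Q : Set Raw} (H : FarS h d m P Q) : FarS h d m Q P :=
  ⟨fun p hp q hq e => H.ne q hq p hp e.symm, fun p hp q hq e => H.nadj q hq p hp e.symm,
    fun p hp q hq z hz h1 h2 => H.nmid q hq p hp z hz h2.symm h1.symm⟩

theorem nd_rel {h d m e q s u : ℕ} (hs : s < h) :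
    rel h d m (nd h m e q (s+1) (u/2)) (nd h m e q s u) := by
  have e1 : h - s = (h - (s+1)) + 1 := by omega
  refine ⟨_, _, rawAdj.child e (q+1) (natToBits (h-(s+1)) (u/2)) (u.testBit 0) ?_, rfl, ?_⟩
  · rw [nb_len]; omega
  · rw [← nb_succ, ← e1]; rfl

theorem nd_root {h m e q u : ℕ} : nd h m e q h u = RootR m := by
  simp [nd, natToBits, canon, RootR]

theorem par_valid {h d m e q s u : ℕ} (hm : 2 ≤ m) (hs : s < h) (hu : 2 * u + 1 < 2 ^ (h - s))
    (hv : Valid h d m (nd h m e q s (2*u+1))) : Valid h d m (nd h m e q (s+1) u) := by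
  rcases (show s + 1 = h ∨ s + 1 < h by omega) with h1 | h1
  · rw [h1, nd_root]
    refine ⟨hm, le_rfl, le_rfl, ?_, by simp, by simp, by simp⟩
    simp
  · have hu' : u < 2 ^ (h - (s+1)) := by
      have := half_lt h1 hu
      rwa [show (2*u+1)/2 = u by omega] at this
    rw [nd_eq hs hu, if_neg (by omega)] at hv
    rw [nd_eq h1 hu', if_neg (by omega)]
    obtain ⟨a1, a2, a3, a4, a5⟩ := hv
    refine ⟨a1, a2, a3, a4, ?_, ?_, ?_⟩
    · rw [nb_len]; omega
    · intro e; exact absurd e (nb_ne_nil h1)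
    · rw [nb_eq_false h1 hu']; omega

theorem far_sib {h d m c i : ℕ} (hm : 2 ≤ m) {P Q : Set Raw} (hP : Good h d m P) (hQ : Good h d m Q)
    (F : FarS h d m P Q) (s u : ℕ) (h1 : Rn h m c i P (s, 2 * u))
    (h2 : Rn h m c i Q (s, 2 * u + 1)) : False := by
  obtain ⟨a1, a2, a3⟩ := h1
  obtain ⟨b1, b2, b3⟩ := h2
  refine F.nmid _ a3 _ b3 _ (par_valid hm b1 b2 (hQ.valid _ b3)) (.inr ?_) (.inl ?_)
  · have := nd_rel (d := d) (m := m) (e := c) (q := i) (u := 2 * u) a1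
    rwa [show 2 * u / 2 = u by omega] at this
  · have := nd_rel (d := d) (m := m) (e := c) (q := i) (u := 2 * u + 1) b1
    rwa [show (2 * u + 1) / 2 = u by omega] at this

theorem far_rn {h d m c i : ℕ} (hm : 2 ≤ m) {P Q : Set Raw} (hP : Good h d m P) (hQ : Good h d m Q)
    (F : FarS h d m P Q) : Far (Rn h m c i P) (Rn h m c i Q) where
  eq a h1 h2 := F.ne _ h1.2.2 _ h2.2.2 rfl
  up s u h1 h2 := F.nadj _ h1.2.2 _ h2.2.2 (.inr (nd_rel h1.1))
  dn s u h1 h2 := F.symm.nadj _ h1.2.2 _ h2.2.2 (.inr (nd_rel h1.1))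
  sib := far_sib hm hP hQ F
  sib' := far_sib hm hQ hP F.symm

theorem crossing {h d m : ℕ} (hh : 1 ≤ h) (hm : 2 ≤ m) {P Q : Set Raw} (hP : Good h d m P)
    (hQ : Good h d m Q) (F : FarS h d m P Q) (c : ℕ) : ∀ i, 
    Cross h d m (c+1) i P → Cross h d m (c+1) i Q → False := by
  induction c with
  | zero =>
    have key : ∀ {R : Set Raw} {u : Raw} {i : ℕ}, Good h d m R → u ∈ R →
        At h d (0+1) (i * NN h ^ (0+1-1)) u → u = .path (i * (d+1)) := by
      intro R u i hR hu ha
      have hv := hR.valid _ hu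
      obtain ⟨h1, h2, h3⟩ := ha
      simp only [zero_add, Nat.sub_self, pow_zero, mul_one] at h1 h2 h3
      cases u with
      | path k =>
        simp only [lo, hi] at h2 h3
        have e1 := Nat.div_add_mod k (d+1)
        have e2 := Nat.div_add_mod (k+d) (d+1)
        have e3 := Nat.mod_lt (k+d) (show d+1 > 0 by omega)
        have e4 := Nat.mod_lt k (show d+1 > 0 by omega)
        rw [h2, Nat.mul_comm] at e1
        rw [h3, Nat.mul_comm] at e2
        congr 1
        omega
      | tree j a p => have := hv.1; simp [lev] at h1; omega
      | spine j a k t f s => have := hv.1; simp [lev] at h1; omega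
    rintro i ⟨u, -, hu, -, au, -⟩ ⟨v, -, hv, -, av, -⟩
    exact F.ne _ hu _ hv ((key hP hu au).trans (key hQ hv av).symm)
  | succ c ih =>
    intro i h1 h2
    exact abstract_main hh (cross_fs hh (by omega) hP h1) (cross_fs hh (by omega) hQ h2)
      (far_rn hm hP hQ F) (fun t _ x => ih _ x.1 x.2)

end Ghdm

namespace Ghdm

theorem vel_ne_spine {h d m jv g e e' q' k t f s : ℕ} (hh : 1 ≤ h) :
    vel h d m jv g e ≠ .spine e' q' k t f s := by
  rw [vel_eq hh]; unfold VsetElem; split_ifs <;> simp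

/-- the leaf `ℓ_k` of tree `q` of level `e` is joined to position `x` -/
def Above (h c x e q k t f : ℕ) : Prop :=
  SpC h e k t f ∧ c < e ∧ (q * NN h + (t - 1)) * NN h ^ (e-1-1) = x

theorem above_unique_lt {h c x e q k t f e' q' k' t' f' : ℕ} (hh : 1 ≤ h)
    (H : Above h c x e q k t f) (H' : Above h c x e' q' k' t' f') (hlt : e < e') : False := by
  obtain ⟨a1, a2, a3⟩ := H
  obtain ⟨b1, b2, b3⟩ := H'
  have hN := NN_ge hh
  have ht := a1.t_bd
  have he := a1.1
  have hM : 0 < NN h ^ (e-1-1) := Nat.pow_pos (by omega)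
  have e1 : NN h ^ (e'-1-1) = NN h ^ (e'-e-1) * NN h * NN h ^ (e-1-1) := by
    rw [← pow_succ, ← pow_add]; congr 1; omega
  rw [← b3, e1, ← Nat.mul_assoc, ← Nat.mul_assoc] at a3
  have a4 := Nat.eq_of_mul_eq_mul_right hM a3
  have a5 := congrArg (· % NN h) a4
  simp only [Nat.mul_mod_left] at a5
  rw [Nat.add_comm, Nat.add_mul_mod_self_right, Nat.mod_eq_of_lt (by omega)] at a5
  omega

theorem above_unique {h c x e q k t f e' q' k' t' f' : ℕ} (hh : 1 ≤ h)
    (H : Above h c x e q k t f) (H' : Above h c x e' q' k' t' f') : e = e' ∧ q = q' ∧ k = k' := by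
  have hN := NN_ge hh
  rcases Nat.lt_trichotomy e e' with h1 | rfl | h1
  · exact (above_unique_lt hh H H' h1).elim
  · obtain ⟨a1, a2, a3⟩ := H
    obtain ⟨b1, b2, b3⟩ := H'
    have hM : 0 < NN h ^ (e-1-1) := Nat.pow_pos (by omega)
    have a4 := Nat.eq_of_mul_eq_mul_right hM (a3.trans b3.symm)
    have ht := a1.t_bd
    have ht' := b1.t_bd
    have a5 := congrArg (· % NN h) a4
    rw [Nat.add_comm, Nat.add_mul_mod_self_right, Nat.mod_eq_of_lt (by omega),
      Nat.add_comm, Nat.add_mul_mod_self_right, Nat.mod_eq_of_lt (by omega)] at a5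
    have a6 : q * NN h = q' * NN h := by omega
    refine ⟨rfl, Nat.eq_of_mul_eq_mul_right (by omega) a6, ?_⟩
    obtain ⟨-, c2, c3, c4, -⟩ := a1
    obtain ⟨-, d2, d3, d4, -⟩ := b1
    omega
  · exact (above_unique_lt hh H' H h1).elim

theorem must_cross {h d m c ix : ℕ} (hh : 1 ≤ h) (hc : 1 ≤ c) {R : Set Raw} (hR : Good h d m R)
    {a b : Raw} (haR : a ∈ R) (ha : At h d c (ix * NN h ^ (c-1)) a) (hb : c < lev b)
    (hbs : ∀ e q k t f s, b ≠ .spine e q k t f s)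
    (hr : Relation.ReflTransGen (fun x y => x ∈ R ∧ y ∈ R ∧ adj h d m x y) a b) :
    (∃ e q k t f, Above h c (ix * NN h ^ (c-1)) e q k t f ∧ nd h m e q 0 (k-1) ∈ R) ∨
    Cross h d m c ix R ∨ ∃ j, j + 1 = ix ∧ Cross h d m c j R := by
  by_contra hcon
  rw [not_or, not_or] at hcon
  obtain ⟨nL, nC, nC'⟩ := hcon
  have hN := NN_ge hh
  have hM : 0 < NN h ^ (c-1) := Nat.pow_pos (by omega)
  set x := ix * NN h ^ (c-1) with hx
  let X1 : ℕ → Raw → Prop := fun j w => (j = ix ∨ j + 1 = ix) ∧ w ∈ Reg h d c j ∧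
      ∃ u ∈ R, At h d c x u ∧ Rch h d m c j R u w
  let X : Raw → Prop := fun w => (∃ j, X1 j w) ∨
    (∃ e q k t f s, Above h c x e q k t f ∧ f ≤ c ∧ w = .spine e (q+1) k t f s)
  have atX : ∀ w ∈ R, At h d c x w → X w := by
    intro w hw ha
    refine .inl ⟨ix, .inl rfl, ⟨ha.1, ha.2.1.ge, ?_⟩, w, hw, ha, .refl⟩
    rw [ha.2.2]; exact Nat.mul_le_mul_right _ (by omega)
  have hA : ∀ j w n, w ∈ R → X1 j w → At h d c (n * NN h ^ (c-1)) w → n = ix := by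
    rintro j w n hw ⟨hj, hreg, u, hu, au, hr⟩ aw
    obtain ⟨-, r2, r3⟩ := hreg
    have b1 := Nat.le_of_mul_le_mul_right (r2.trans aw.2.1.le) hM
    have b2 := Nat.le_of_mul_le_mul_right (aw.2.2.ge.trans r3) hM
    by_contra hne
    rcases hj with rfl | hj
    · have : n = j + 1 := by omega
      subst this
      exact nC ⟨u, w, hu, hw, au, aw, hr⟩
    · have : n = j := by omega
      subst this
      refine nC' ⟨n, hj, w, u, hw, hu, aw, ?_, hr.symm⟩
      rw [hj]; exact au
  have hlow : ∀ j j' w w', w ∈ R → w' ∈ R → X1 j w → w ∈ Reg h d c j' → w' ∈ Reg h d c j' →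
      adj h d m w w' → X w' := by
    intro j j' w w' hw hw' h1 h2 h3 h4
    have st : RStep h d m c j' R w w' := ⟨hw, hw', h2, h3, h4⟩
    by_cases hjj : j' = j
    · subst hjj
      obtain ⟨g1, g2, u, g3, g4, g5⟩ := h1
      exact .inl ⟨j', g1, h3, u, g3, g4, g5.tail st⟩
    · have lw := lo_le_hi (d := d) hh w
      obtain ⟨l1, l2, l3⟩ := h1.2.1
      obtain ⟨m1, m2, m3⟩ := h2
      have b1 := Nat.le_of_mul_le_mul_right (l2.trans (lw.trans m3)) hM
      have b2 := Nat.le_of_mul_le_mul_right (m2.trans (lw.trans l3)) hM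
      rcases (show j' = j + 1 ∨ j = j' + 1 by omega) with rfl | rfl
      · have aw : At h d c ((j+1) * NN h ^ (c-1)) w := ⟨l1, by omega, by omega⟩
        have hn := hA _ _ _ hw h1 aw
        rw [hn] at aw
        exact .inl ⟨j+1, by omega, h3, w, hw, aw, .single st⟩
      · have aw : At h d c ((j'+1) * NN h ^ (c-1)) w := ⟨l1, by omega, by omega⟩
        have hn := hA _ _ _ hw h1 aw
        rw [hn] at aw
        exact .inl ⟨j', by omega, h3, w, hw, aw, .single st⟩
  have hvel : ∀ j e q k t f, SpC h e k t f → c < e → vel h d m (e-1) (q * NN h + t) f ∈ R →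
      X1 j (vel h d m (e-1) (q * NN h + t) f) → f ≤ c ∧ Above h c x e q k t f := by
    intro j e q k t f H hce hw h1
    have hv := vel_pos (d := d) (m := m) (q := q) hh H
    have hf : f ≤ c := by
      have := h1.2.1.1
      rwa [lev_vel hh] at this
    have e1 : (q * NN h + (t-1)) * NN h ^ (e-1-1) =
        ((q * NN h + (t-1)) * NN h ^ (e-1-c)) * NN h ^ (c-1) := by
      rw [Nat.mul_assoc, ← pow_add]; congr 2; omega
    have := hA _ _ _ hw h1 ⟨h1.2.1.1, hv.2.1.trans e1, hv.2.2.trans e1⟩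
    rw [this] at e1
    exact ⟨hf, H, hce, e1⟩
  have step1 : ∀ w w', w ∈ R → w' ∈ R → rel h d m w w' → X w → X w' := by
    intro w w' hw hw' hr hX
    obtain ⟨e, q, H⟩ := hR.ec hw hw' hr
    obtain ⟨he, r1, r2⟩ := ec_reg hh H
    rcases hX with ⟨j, h1⟩ | ⟨e0, q0, k0, t0, f0, s0, h1, h2, h3⟩
    · have hl := ec_lev hh H
      have := h1.2.1.1
      exact hlow _ _ _ _ hw hw' h1 (reg_mono he (by omega) r1) (reg_mono he (by omega) r2) (.inl hr)
    · cases H with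
      | base k => simp at h3
      | child _ _ s u g1 g2 g3 => exact absurd h3 (nd_ne_spine g2 (half_lt g2 g3))
      | step _ _ k t f s Hs =>
        simp only [Raw.spine.injEq] at h3
        obtain ⟨rfl, c2, rfl, rfl, rfl, rfl⟩ := h3
        have : q = q0 := by omega
        subst this
        exact .inr ⟨_, _, _, _, _, _, h1, h2, rfl⟩
      | leaf _ _ k t f s Hs => exact absurd h3 (nd_ne_spine hh Hs.k_bd)
      | down _ _ k t f s Hs =>
        simp only [Raw.spine.injEq] at h3
        obtain ⟨rfl, c2, rfl, rfl, rfl, rfl⟩ := h3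
        have : q = q0 := by omega
        subst this
        have hv := vel_pos (d := d) (m := m) (q := q) hh Hs
        refine atX _ hw' ⟨by rw [lev_vel hh]; exact h2, ?_, ?_⟩
        · rw [hv.2.1, h1.2.2]
        · rw [hv.2.2, h1.2.2]
      | short _ _ k t f Hs => exact absurd h3 (nd_ne_spine hh Hs.k_bd)
  have step2 : ∀ w w', w ∈ R → w' ∈ R → rel h d m w' w → X w → X w' := by
    intro w w' hw hw' hr hX
    obtain ⟨e, q, H⟩ := hR.ec hw' hw hr
    obtain ⟨he, r1, r2⟩ := ec_reg hh H
    rcases hX with ⟨j, h1⟩ | ⟨e0, q0, k0, t0, f0, s0, h1, h2, h3⟩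
    · by_cases hec : e ≤ c
      · exact hlow _ _ _ _ hw hw' h1 (reg_mono he (by omega) r2) (reg_mono he (by omega) r1) (.inr hr)
      · have hlw := h1.2.1.1
        cases H with
        | base k => omega
        | child _ _ s u g1 g2 g3 => rw [lev_nd (by omega) g3] at hlw; omega
        | step _ _ k t f s Hs => simp only [lev] at hlw; omega
        | leaf _ _ k t f s Hs => simp only [lev] at hlw; omega
        | down _ _ k t f s Hs =>
          obtain ⟨g1, g2⟩ := hvel _ _ _ _ _ _ Hs (by omega) hw h1
          exact .inr ⟨_, _, _, _, _, _, g2, g1, rfl⟩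
        | short _ _ k t f Hs =>
          obtain ⟨g1, g2⟩ := hvel _ _ _ _ _ _ Hs (by omega) hw h1
          exact absurd ⟨_, _, _, _, _, g2, hw'⟩ nL
    · cases H with
      | base k => simp at h3
      | child _ _ s u g1 g2 g3 => exact absurd h3 (nd_ne_spine (by omega) g3)
      | step _ _ k t f s Hs =>
        simp only [Raw.spine.injEq] at h3
        obtain ⟨rfl, c2, rfl, rfl, rfl, rfl⟩ := h3
        have : q = q0 := by omega
        subst this
        exact .inr ⟨_, _, _, _, _, _, h1, h2, rfl⟩
      | leaf _ _ k t f s Hs =>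
        simp only [Raw.spine.injEq] at h3
        obtain ⟨rfl, c2, rfl, rfl, rfl, rfl⟩ := h3
        have : q = q0 := by omega
        subst this
        exact absurd ⟨_, _, _, _, _, h1, hw'⟩ nL
      | down _ _ k t f s Hs => exact absurd h3 (vel_ne_spine hh)
      | short _ _ k t f Hs => exact absurd h3 (vel_ne_spine hh)
  have hXb : X b := by
    clear hb hbs
    induction hr with
    | refl => exact atX _ haR ha
    | tail _ st ih =>
      obtain ⟨s1, s2, s3 | s3⟩ := st
      · exact step1 _ _ s1 s2 s3 ih
      · exact step2 _ _ s1 s2 s3 ih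
  rcases hXb with ⟨j, h1⟩ | ⟨e, q, k, t, f, s, -, -, h3⟩
  · have := h1.2.1.1; omega
  · exact hbs _ _ _ _ _ _ h3

end Ghdm

namespace Ghdm

theorem g_adj {h d m : ℕ} {u v : Verts h d m} :
    (G h d m).Adj u v ↔ u.1 ≠ v.1 ∧ adj h d m u.1 v.1 := by
  simp [G, adj, SimpleGraph.fromRel_adj]

theorem walk_rt {h d m : ℕ} {R : Set Raw} {u v : Verts h d m} (p : (G h d m).Walk u v)
    (hp : ∀ w ∈ p.support, w.1 ∈ R) :
    Relation.ReflTransGen (fun x y => x ∈ R ∧ y ∈ R ∧ adj h d m x y) u.1 v.1 := by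
  induction p with
  | nil => exact .refl
  | cons e p ih =>
    refine .head ⟨hp _ (by simp), hp _ (by simp), (g_adj.1 e).2⟩ (ih ?_)
    intro w hw
    exact hp w (by simp [hw])

theorem edist_adj {h d m : ℕ} {u v : Verts h d m} (H : adj h d m u.1 v.1) :
    (G h d m).edist u v ≤ 1 := by
  by_cases e : u = v
  · subst e; simp
  · have : (G h d m).Adj u v := g_adj.2 ⟨fun x => e (Subtype.ext x), H⟩
    exact (SimpleGraph.edist_eq_one_iff_adj.2 this).le

theorem far_of {h d m : ℕ} {U U' : Set (Verts h d m)}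
    (H : ((3 : ℕ) : ℕ∞) ≤ CGT.sDist (G h d m) U U') :
    FarS h d m (Subtype.val '' U) (Subtype.val '' U') := by
  have key : ∀ u ∈ U, ∀ v ∈ U', ((3 : ℕ) : ℕ∞) ≤ (G h d m).edist u v := by
    intro u hu v hv
    exact H.trans ((iInf_le _ (⟨u, hu⟩ : U)).trans (iInf_le _ (⟨v, hv⟩ : U')))
  refine ⟨?_, ?_, ?_⟩
  · rintro _ ⟨u, hu, rfl⟩ _ ⟨v, hv, rfl⟩ e
    have := key u hu v hv
    rw [Subtype.ext e] at this
    simp at this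
  · rintro _ ⟨u, hu, rfl⟩ _ ⟨v, hv, rfl⟩ e
    have := (key u hu v hv).trans (edist_adj e)
    revert this; decide
  · rintro _ ⟨u, hu, rfl⟩ _ ⟨v, hv, rfl⟩ z hz e1 e2
    have h1 := edist_adj (u := u) (v := ⟨z, hz⟩) e1
    have h2 := edist_adj (u := ⟨z, hz⟩) (v := v) e2
    have := (key u hu v hv).trans (SimpleGraph.edist_triangle.trans (add_le_add h1 h2))
    revert this; decide

theorem ivt (f : ℕ → ℕ) (n : ℕ) (h0 : f 0 ≤ n) (hs : ∀ c, f (c+1) ≤ f c + 1) (M : ℕ)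
    (hM : n ≤ f M) : ∃ c, f c = n := by
  induction M with
  | zero => exact ⟨0, by omega⟩
  | succ M ih =>
    rcases Nat.lt_or_ge (f M) n with h1 | h1
    · exact ⟨M+1, by have := hs M; omega⟩
    · exact ih h1

theorem split5 {α : Type*} (S : Finset α) (l : α → ℕ) (hinj : Set.InjOn l S)
    (h1 : ∀ x ∈ S, 1 ≤ l x) (hc : 14 ≤ S.card) :
    ∃ (c : ℕ) (A B : Finset α), 1 ≤ c ∧ A ⊆ S ∧ B ⊆ S ∧ A.card = 5 ∧ B.card = 5 ∧
      (∀ x ∈ A, l x ≤ c) ∧ ∀ x ∈ B, c < l x := by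
  classical
  have f0 : (S.filter (fun x => l x ≤ 0)).card = 0 := by
    rw [Finset.card_eq_zero, Finset.filter_eq_empty_iff]
    intro x hx; have := h1 x hx; omega
  obtain ⟨c, hc5⟩ := ivt (fun c => (S.filter (fun x => l x ≤ c)).card) 5 (by omega) (by
    intro c
    have e : S.filter (fun x => l x ≤ c + 1) ⊆
        S.filter (fun x => l x ≤ c) ∪ S.filter (fun x => l x = c + 1) := by
      intro x hx
      simp only [Finset.mem_filter, Finset.mem_union] at hx ⊢
      have := hx.2
      rcases (show l x ≤ c ∨ l x = c + 1 by omega) with h | h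
      · exact .inl ⟨hx.1, h⟩
      · exact .inr ⟨hx.1, h⟩
    have e2 : (S.filter (fun x => l x = c + 1)).card ≤ 1 := by
      rw [Finset.card_le_one]
      intro a ha b hb
      simp only [Finset.mem_filter] at ha hb
      exact hinj ha.1 hb.1 (ha.2.trans hb.2.symm)
    have := Finset.card_le_card e
    have := Finset.card_union_le (S.filter (fun x => l x ≤ c)) (S.filter (fun x => l x = c + 1))
    omega) (S.sup l) (by
      have : S.filter (fun x => l x ≤ S.sup l) = S := by
        rw [Finset.filter_eq_self]
        intro x hx; exact Finset.le_sup hx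
      simp only [this]; omega)
  have hsum := Finset.card_filter_add_card_filter_not (s := S) (fun x => l x ≤ c)
  obtain ⟨B, hB, hB5⟩ := Finset.exists_subset_card_eq
    (show 5 ≤ (S.filter (fun x => ¬ l x ≤ c)).card by omega)
  refine ⟨c, S.filter (fun x => l x ≤ c), B, ?_, Finset.filter_subset _ _,
    hB.trans (Finset.filter_subset _ _), hc5, hB5, ?_, ?_⟩
  · rcases Nat.eq_zero_or_pos c with rfl | h2
    · omega
    · exact h2
  · intro x hx; exact (Finset.mem_filter.1 hx).2
  · intro x hx
    have := (Finset.mem_filter.1 (hB hx)).2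
    omega

theorem main (h d m : ℕ) (hm : 2 ≤ m) (j g : ℕ)
    (W : Set (Verts h d m)) (hWsub : W ⊆ lift (VsetRaw h d m j g)) :
    ¬ CGT.FatPathConn (G h d m) 3 7 W := by
  classical
  rintro ⟨⟨S, hSW, hS⟩, -, hW⟩
  rcases Nat.eq_zero_or_pos h with rfl | hh
  · have hsub : S.image Subtype.val ⊆
        ({.path ((g - 1) * NN 0 ^ (j - 1) * (d + 1)), RootR m} : Finset Raw) := by
      intro x hx
      obtain ⟨y, hy, rfl⟩ := Finset.mem_image.1 hx
      obtain ⟨e, he1, he2, he⟩ := hWsub (hSW hy)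
      rw [he]
      unfold VsetElem
      split_ifs <;> simp [canon, RootR]
    have h1 := Finset.card_le_card hsub
    rw [Finset.card_image_of_injective _ Subtype.val_injective] at h1
    have h2 := Finset.card_le_two (a := Raw.path ((g - 1) * NN 0 ^ (j - 1) * (d + 1)))
      (b := RootR m)
    omega
  have hel : ∀ y ∈ W, ∃ e, 1 ≤ e ∧ e ≤ j ∧ y.1 = vel h d m j g e := fun y hy => hWsub hy
  obtain ⟨c, A, B, hc, hA, hB, hA5, hB5, hAc, hBc⟩ := split5 S (fun y => lev y.1) (by
    intro x hx y hy hxy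
    obtain ⟨e, he1, he2, he⟩ := hel x (hSW hx)
    obtain ⟨e', he1', he2', he'⟩ := hel y (hSW hy)
    simp only [he, he', lev_vel hh] at hxy
    apply Subtype.ext
    rw [he, he', hxy]) (by
    intro x hx
    obtain ⟨e, he1, he2, he⟩ := hel x (hSW hx)
    simp only [he, lev_vel hh]; exact he1) hS
  have hAW : (A : Set (Verts h d m)) ⊆ W := fun x hx => hSW (hA hx)
  have hBW : (B : Set (Verts h d m)) ⊆ W := fun x hx => hSW (hB hx)
  obtain ⟨a, b, P, -, hab, hfar⟩ := hW 5 (by omega) A B hAW hBW hA5 hB5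
  have hcj : c < j := by
    obtain ⟨e, he1, he2, he⟩ := hel _ (hBW (hab 0).2)
    have := hBc _ (hab 0).2
    simp only [he, lev_vel hh] at this
    omega
  set ix := (g-1) * NN h ^ (j-c) with hix
  have hx : (g-1) * NN h ^ (j-1) = ix * NN h ^ (c-1) := by
    rw [hix, Nat.mul_assoc, ← pow_add]; congr 2; omega
  let R : Fin 5 → Set Raw := fun i => Subtype.val '' (CGT.walkSupp (P i))
  have hRfar : ∀ i k, i ≠ k → FarS h d m (R i) (R k) := fun i k hik => far_of (hfar i k hik)
  have hRv : ∀ i, ∀ x ∈ R i, Valid h d m x := by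
    rintro i _ ⟨y, -, rfl⟩; exact y.2
  let Box : Fin 4 → Set Raw → Prop := fun n R =>
    (n = 0 ∧ RootR m ∈ R) ∨
    (n = 1 ∧ ∃ e q k t f, Above h c (ix * NN h ^ (c-1)) e q k t f ∧ nd h m e q 0 (k-1) ∈ R) ∨
    (n = 2 ∧ Good h d m R ∧ Cross h d m c ix R) ∨
    (n = 3 ∧ Good h d m R ∧ ∃ j, j + 1 = ix ∧ Cross h d m c j R)
  have hbox : ∀ i, ∃ n, Box n (R i) := by
    intro i
    by_cases hroot : RootR m ∈ R i
    · exact ⟨0, .inl ⟨rfl, hroot⟩⟩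
    have hG : Good h d m (R i) := ⟨hRv i, hroot⟩
    obtain ⟨e, he1, he2, he⟩ := hel _ (hAW (hab i).1)
    obtain ⟨e', he1', he2', he'⟩ := hel _ (hBW (hab i).2)
    have hp := lohi_vel (d := d) (m := m) (g := g) hh he1 he2
    have hrt := walk_rt (R := R i) (P i) (fun w hw => ⟨w, hw, rfl⟩)
    have := must_cross (ix := ix) hh hc hG (a := (a i).1) (b := (b i).1)
      ⟨a i, (P i).start_mem_support, rfl⟩
      ⟨hAc _ (hab i).1, by rw [he, hp.1, hx], by rw [he, hp.2, hx]⟩ (hBc _ (hab i).2)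
      (by intros; rw [he']; exact vel_ne_spine hh) hrt
    rcases this with h1 | h1 | h1
    · exact ⟨1, .inr (.inl ⟨rfl, h1⟩)⟩
    · exact ⟨2, .inr (.inr (.inl ⟨rfl, hG, h1⟩))⟩
    · exact ⟨3, .inr (.inr (.inr ⟨rfl, hG, h1⟩))⟩
  choose n hn using hbox
  obtain ⟨i, k, hik, hnk⟩ := Fintype.exists_ne_map_eq_of_card_lt n (by simp)
  have hi := hn i
  have hk := hn k
  rw [hnk] at hi
  generalize n k = t at hi hk
  have F := hRfar i k hik
  obtain ⟨c, rfl⟩ : ∃ c', c = c' + 1 := ⟨c - 1, by omega⟩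
  rcases hi with ⟨rfl, h1⟩ | ⟨rfl, h1⟩ | ⟨rfl, h1⟩ | ⟨rfl, h1⟩ <;>
  rcases hk with ⟨h0, h2⟩ | ⟨h0, h2⟩ | ⟨h0, h2⟩ | ⟨h0, h2⟩ <;>
  first | (exfalso; revert h0; decide) | skip
  · exact F.ne _ h1 _ h2 rfl
  · obtain ⟨e, q, k, t, f, a1, a2⟩ := h1
    obtain ⟨e', q', k', t', f', b1, b2⟩ := h2
    obtain ⟨rfl, rfl, rfl⟩ := above_unique hh a1 b1
    exact F.ne _ a2 _ b2 rfl
  · exact crossing hh hm h1.1 h2.1 F _ _ h1.2 h2.2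
  · obtain ⟨g1, j1, e1, x1⟩ := h1
    obtain ⟨g2, j2, e2, x2⟩ := h2
    have : j1 = j2 := by omega
    subst this
    exact crossing hh hm g1 g2 F _ _ x1 x2

end Ghdm

/-- no gluing set `V_i^j` of `G_{h,d,m}` contains a subset that is 3-fat
7-path-connected in `G_{h,d,m}`. -/
theorem statement12 (h d m : ℕ) (hm : 2 ≤ m) (j g : ℕ)
    (hj1 : 1 ≤ j) (hj2 : j ≤ m - 1) (hg1 : 1 ≤ g) (hg2 : g ≤ Ghdm.NN h ^ (m - j) + 1)
    (W : Set (Ghdm.Verts h d m)) (hWsub : W ⊆ Ghdm.lift (Ghdm.VsetRaw h d m j g)) :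
    ¬ CGT.FatPathConn (Ghdm.G h d m) 3 7 W := by
  exact Ghdm.main h d m hm j g W hWsub
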